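/- arXiv:2102.00480 — 5 statements merged into one kernel-verified Lean document; each statement's English description precedes it below -/
import Mathlib

section
/- Let L/F be a Galois extension of non-archimedean local fields of characteristic zero whose Galois group is isomorphic to the Klein four-group Z/2 × Z/2, and let E be a quadratic extension of F contained in L. Then every element of F^× is a norm from L to E, i.e. F^× ⊆ N_{L/E}(L^×). -/
set_option autoImplicit false
set_option linter.unusedSectionVars false

namespace BQ
open scoped NormedField Valued

section LF
variable {K : Type} [NontriviallyNormedField K] [IsUltrametricDist K] [ProperSpace K]

theorem finite_residue : Finite 𝓀[K] := by
  have hc : CompactSpace 𝒪[K] := by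
    rw [← isCompact_univ_iff, Subtype.isCompact_iff, Set.image_univ, Subtype.range_coe_subtype]
    have : {x : K | x ∈ 𝒪[K]} = Metric.closedBall 0 1 := by
      ext x; simp [Valued.integer.mem_iff]
    rw [this]
    exact isCompact_closedBall 0 1
  have : (Valued.v : Valuation K _).RankOne :=
    inferInstanceAs (NormedField.valuation (K := K)).RankOne
  exact (Valued.integer.compactSpace_iff_completeSpace_and_isDiscreteValuationRing_and_finite_residueField.1 hc).2.2

theorem residue_zero (x : 𝒪[K]) : IsLocalRing.residue 𝒪[K] x = 0 ↔ ‖(x : K)‖ < 1 := by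
  rw [IsLocalRing.residue_eq_zero_iff, IsLocalRing.mem_maximalIdeal, mem_nonunits_iff,
    Valued.integer.isUnit_iff_norm_eq_one]
  have := Valued.integer.norm_le_one x
  constructor
  · intro h; exact lt_of_le_of_ne this h
  · intro h; exact h.ne

theorem residue_pkg : ∃ (k : Type) (_ : Field k) (_ : Finite k) (O : Subring K) (r : O →+* k),
    (∀ x, x ∈ O ↔ ‖x‖ ≤ 1) ∧ Function.Surjective r ∧ ∀ x : O, r x = 0 ↔ ‖(x : K)‖ < 1 :=
  ⟨𝓀[K], inferInstance, finite_residue, 𝒪[K], IsLocalRing.residue 𝒪[K],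
    fun _ => Valued.integer.mem_iff, IsLocalRing.residue_surjective, residue_zero⟩


theorem hensel (T N z : K) (hz : ‖z‖ ≤ 1)
    (hf : ‖z ^ 2 - T * z + N‖ < 1) (hd : ‖T ^ 2 - 4 * N‖ = 1) :
    ∃ w : K, w ^ 2 - T * w + N = 0 := by
  have h4 : ‖(4 : K)‖ ≤ 1 := by
    have := IsUltrametricDist.norm_natCast_le_one K 4
    simpa using this
  have h2 : ‖(2 : K)‖ ≤ 1 := by
    have := IsUltrametricDist.norm_natCast_le_one K 2
    simpa using this
  have hder : ∀ x : K, ‖x ^ 2 - T * x + N‖ < 1 → ‖2 * x - T‖ = 1 := by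
    intro x hx
    have e : (2 * x - T) ^ 2 = 4 * (x ^ 2 - T * x + N) + (T ^ 2 - 4 * N) := by ring
    have h : ‖4 * (x ^ 2 - T * x + N)‖ < ‖T ^ 2 - 4 * N‖ := by
      rw [hd, norm_mul]
      nlinarith [norm_nonneg (4 : K), norm_nonneg (x ^ 2 - T * x + N)]
    have := IsUltrametricDist.norm_add_eq_max_of_norm_ne_norm h.ne
    rw [← e, max_eq_right h.le, hd, norm_pow] at this
    exact (pow_eq_one_iff_of_nonneg (norm_nonneg _) two_ne_zero).1 this
  let S : Set K := Metric.closedBall 0 1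
  have hS : IsCompact S := isCompact_closedBall 0 1
  obtain ⟨w, hwS, hw⟩ := hS.exists_isMinOn ⟨z, by simpa [S] using hz⟩
    (f := fun x : K => ‖x ^ 2 - T * x + N‖) (by fun_prop)
  have hwz : ‖w ^ 2 - T * w + N‖ < 1 := lt_of_le_of_lt (hw (show z ∈ S by simpa [S] using hz)) hf
  have hw1 : ‖w‖ ≤ 1 := by simpa [S] using hwS
  refine ⟨w, ?_⟩
  by_contra hne
  set f := w ^ 2 - T * w + N with hfdef
  have hpos : 0 < ‖f‖ := norm_pos_iff.2 hne
  have hd1 := hder w hwz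
  set g := 2 * w - T with hg
  have hg0 : g ≠ 0 := by intro h; rw [h] at hd1; simp at hd1
  have hfg : ‖f / g‖ = ‖f‖ := by rw [norm_div, hd1, div_one]
  have hmem : w - f / g ∈ S := by
    have : ‖w - f / g‖ ≤ max ‖w‖ ‖f / g‖ := by
      rw [sub_eq_add_neg, ← norm_neg (f / g)]; exact IsUltrametricDist.norm_add_le_max _ _
    simp only [S, mem_closedBall_zero_iff]
    exact this.trans (max_le hw1 (by rw [hfg]; exact hwz.le))
  have h := hw hmem
  have e : (w - f / g) ^ 2 - T * (w - f / g) + N = (f / g) ^ 2 := by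
    have : (w - f / g) ^ 2 - T * (w - f / g) + N = f - f / g * g + (f / g) ^ 2 := by
      rw [hfdef, hg]; ring
    rw [this, div_mul_cancel₀ _ hg0]; ring
  simp only [Set.mem_ofPred_eq] at h
  rw [e, norm_pow, hfg] at h
  nlinarith

theorem parity (x y : K) (hx : x ≠ 0) (hy : y ≠ 0) :
    (∃ t : K, t ≠ 0 ∧ ‖x‖ = ‖t‖ ^ 2) ∨ (∃ t : K, t ≠ 0 ∧ ‖y‖ = ‖t‖ ^ 2) ∨
      (∃ t : K, t ≠ 0 ∧ ‖x‖ = ‖y‖ * ‖t‖ ^ 2) := by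
  obtain ⟨c, hc0, hc1⟩ := NormedField.exists_norm_lt_one K
  have hcl : IsCompact (Metric.ball (0 : K) 1) :=
    (isCompact_closedBall (0 : K) 1).of_isClosed_subset (IsUltrametricDist.isClosed_ball 0 1)
      Metric.ball_subset_closedBall
  obtain ⟨ϖ, hϖ, hmax⟩ := hcl.exists_isMaxOn ⟨c, by simpa using hc1⟩
    (f := fun x : K => ‖x‖) (by fun_prop)
  have hϖ1 : ‖ϖ‖ < 1 := by simpa using hϖ
  have hϖ0 : 0 < ‖ϖ‖ := hc0.trans_le (hmax (by simpa using hc1))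
  have hϖn : ϖ ≠ 0 := norm_pos_iff.1 hϖ0
  have key : ∀ x : K, x ≠ 0 → ∃ n : ℤ, ‖x‖ = ‖ϖ‖ ^ n := by
    intro x hx
    obtain ⟨n, hn1, hn2⟩ := exists_mem_Ioc_zpow (norm_pos_iff.2 hx)
      ((one_lt_inv₀ hϖ0).2 hϖ1)
    refine ⟨-(n + 1), ?_⟩
    rw [← inv_zpow', ]
    refine le_antisymm hn2 ?_
    by_contra hlt
    push Not at hlt
    have hm : ‖x * ϖ ^ (n + 1)‖ < 1 := by
      rw [norm_mul, norm_zpow]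
      rw [inv_zpow] at hlt
      rwa [lt_inv_comm₀ (norm_pos_iff.2 hx) (zpow_pos hϖ0 _), ← one_div, lt_div_iff₀ (norm_pos_iff.2 hx), mul_comm] at hlt
    have := hmax (show x * ϖ ^ (n + 1) ∈ Metric.ball (0 : K) 1 by simpa using hm)
    simp only [Set.mem_ofPred_eq] at this
    rw [norm_mul, norm_zpow, zpow_add_one₀ hϖ0.ne', ← mul_assoc] at this
    have h3 : ‖x‖ * ‖ϖ‖ ^ n ≤ 1 := by
      by_contra h; push Not at h; nlinarith
    rw [inv_zpow] at hn1
    have := (inv_lt_iff_one_lt_mul₀ (zpow_pos hϖ0 n)).1 hn1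
    linarith
  obtain ⟨m, hm⟩ := key x hx
  obtain ⟨n, hn⟩ := key y hy
  rcases Int.even_or_odd' m with ⟨i, hi | hi⟩
  · left
    refine ⟨ϖ ^ i, zpow_ne_zero _ hϖn, ?_⟩
    rw [hm, hi, norm_zpow, ← zpow_natCast, ← zpow_mul]; congr 1; push_cast; ring
  right
  rcases Int.even_or_odd' n with ⟨j, hj | hj⟩
  · left
    refine ⟨ϖ ^ j, zpow_ne_zero _ hϖn, ?_⟩
    rw [hn, hj, norm_zpow, ← zpow_natCast, ← zpow_mul]; congr 1; push_cast; ring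
  right
  refine ⟨ϖ ^ (i - j), zpow_ne_zero _ hϖn, ?_⟩
  rw [hm, hn, hi, hj, norm_zpow, ← zpow_natCast, ← zpow_mul, ← zpow_add₀ hϖ0.ne']
  congr 1; push_cast; ring

end LF

section FF
open Polynomial
variable {k : Type} [Field k] [Finite k]

theorem ff_repr (h2 : (2 : k) ≠ 0) (δ u : k) (hδ : δ ≠ 0) : ∃ s t : k, s ^ 2 - δ * t ^ 2 = u := by
  have := Fintype.ofFinite k
  have hodd : Fintype.card k % 2 = 1 := by
    apply FiniteField.odd_card_of_char_ne_two
    intro h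
    apply h2
    have := ringChar.Nat.cast_ringChar (R := k)
    rw [h] at this
    exact_mod_cast this
  obtain ⟨a, b, hab⟩ := FiniteField.exists_root_sum_quadratic (R := k) (f := X ^ 2)
    (g := C (-δ) * X ^ 2 + C 0 * X + C (-u)) (by simp) (degree_quadratic (neg_ne_zero.2 hδ)) hodd
  refine ⟨a, b, ?_⟩
  simp at hab
  linear_combination hab

theorem ff_sqrt (h2 : (2 : k) = 0) (u : k) : ∃ s : k, s ^ 2 = u := by
  have := Fintype.ofFinite k
  have hch : ringChar k = 2 := by
    have : CharP k 2 := CharTwo.of_one_ne_zero_of_two_eq_zero one_ne_zero h2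
    exact ringChar.eq_iff.2 this
  obtain ⟨s, hs⟩ := FiniteField.isSquare_of_char_two hch u
  exact ⟨s, by rw [hs]; ring⟩

theorem ff_embed (T N T' N' : k) (h : ∀ t : k, t ^ 2 - T * t + N ≠ 0)
    (h' : ∀ t : k, t ^ 2 - T' * t + N' ≠ 0) :
    ∃ α β : k, 2 * α + β * T' = T ∧ α ^ 2 + α * β * T' + β ^ 2 * N' = N := by
  let f : k[X] := C 1 * X ^ 2 + C (-T) * X + C N
  let f' : k[X] := C 1 * X ^ 2 + C (-T') * X + C N'
  have nd : f.natDegree = 2 := natDegree_quadratic one_ne_zero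
  have nd' : f'.natDegree = 2 := natDegree_quadratic one_ne_zero
  have irr : Irreducible f := by
    rw [irreducible_iff_roots_eq_zero_of_degree_le_three (by omega) (by omega)]
    apply Multiset.eq_zero_of_forall_notMem
    intro t ht
    have := (mem_roots'.1 ht).2
    apply h t
    simp [f] at this
    linear_combination this
  have irr' : Irreducible f' := by
    rw [irreducible_iff_roots_eq_zero_of_degree_le_three (by omega) (by omega)]
    apply Multiset.eq_zero_of_forall_notMem
    intro t ht
    have := (mem_roots'.1 ht).2
    apply h' t
    simp [f'] at this
    linear_combination this
  have : Fact (Irreducible f) := ⟨irr⟩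
  have : Fact (Irreducible f') := ⟨irr'⟩
  have d : Module.finrank k (AdjoinRoot f) = 2 := by
    rw [(AdjoinRoot.powerBasis irr.ne_zero).finrank, AdjoinRoot.powerBasis_dim, nd]
  have d' : Module.finrank k (AdjoinRoot f') = 2 := by
    rw [(AdjoinRoot.powerBasis irr'.ne_zero).finrank, AdjoinRoot.powerBasis_dim, nd']
  have : Module.Finite k (AdjoinRoot f') := Module.finite_of_finrank_pos (by omega)
  have : Finite (AdjoinRoot f') := Module.finite_of_finite k
  obtain ⟨φ⟩ := FiniteField.nonempty_algHom_of_finrank_dvd (F := k) (K := AdjoinRoot f)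
    (L := AdjoinRoot f') (by rw [d, d'])
  have hz : aeval (φ (AdjoinRoot.root f)) f = 0 := by
    rw [aeval_algHom_apply, AdjoinRoot.aeval_eq, AdjoinRoot.mk_self, map_zero]
  obtain ⟨g, hg⟩ := AdjoinRoot.mk_surjective (φ (AdjoinRoot.root f))
  have mon' : f'.Monic := by
    unfold Monic leadingCoeff; rw [nd']; simp [f']
  have hr : ∃ α β : k, g %ₘ f' = C β * X + C α := by
    have hl : (g %ₘ f').natDegree ≤ 1 := by
      have := natDegree_modByMonic_lt g mon' (by intro h; rw [h] at nd'; simp at nd')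
      omega
    exact ⟨_, _, eq_X_add_C_of_natDegree_le_one hl⟩
  obtain ⟨α, β, hr⟩ := hr
  have hg2 : φ (AdjoinRoot.root f) = AdjoinRoot.mk f' (C β * X + C α) := by
    rw [← hg, ← hr, AdjoinRoot.mk_eq_mk]
    have := modByMonic_add_div g f'
    exact ⟨g /ₘ f', by linear_combination -this⟩
  rw [hg2] at hz
  have hz2 : AdjoinRoot.mk f' (C (β * (2 * α + β * T' - T)) * X
      + C (α ^ 2 - β ^ 2 * N' - T * α + N)) = 0 := by
    have e : AdjoinRoot.mk f' (f.comp (C β * X + C α)) = 0 := by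
      rw [← hz, ← AdjoinRoot.aeval_eq, aeval_comp, AdjoinRoot.aeval_eq]
    rw [AdjoinRoot.mk_eq_zero] at e ⊢
    have : C (β * (2 * α + β * T' - T)) * X
      + C (α ^ 2 - β ^ 2 * N' - T * α + N) = f.comp (C β * X + C α) - C (β ^ 2) * f' := by
      have h2 : (C 2 : k[X]) = 2 := rfl
      simp [f, f', h2]; ring
    rw [this]
    exact dvd_sub e (dvd_mul_left _ _)
  rw [AdjoinRoot.mk_eq_zero] at hz2
  have h0 := eq_zero_of_dvd_of_natDegree_lt hz2 (by
    rw [nd']; exact lt_of_le_of_lt natDegree_linear_le (by norm_num))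
  have c0 := congrArg (fun q : k[X] => q.coeff 0) h0
  have c1 := congrArg (fun q : k[X] => q.coeff 1) h0
  simp only [coeff_add, coeff_C_mul, coeff_X_one, coeff_X_zero, coeff_C_zero, coeff_C_succ, coeff_zero, mul_zero, mul_one, add_zero, zero_add, mul_eq_zero] at c0 c1
  rcases c1 with hβ | c1
  · exfalso
    apply h α
    rw [hβ] at c0
    linear_combination c0
  · refine ⟨α, β, by linear_combination c1, ?_⟩
    linear_combination α * c1 - c0

end FF

section LF2
variable {K : Type} [NontriviallyNormedField K] [IsUltrametricDist K] [ProperSpace K]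

theorem norm_sub_one {a b : K} (ha : ‖a‖ = 1) (hb : ‖b‖ < 1) : ‖a - b‖ = 1 := by
  have hb' : ‖-b‖ < 1 := by rwa [norm_neg]
  rw [sub_eq_add_neg, IsUltrametricDist.norm_add_eq_max_of_norm_ne_norm (by rw [ha]; exact hb'.ne'),
    ha, max_eq_left hb'.le]

theorem norm_sub_lt {a b : K} (ha : ‖a‖ < 1) (hb : ‖b‖ < 1) : ‖a - b‖ < 1 := by
  have hb' : ‖-b‖ < 1 := by rwa [norm_neg]
  rw [sub_eq_add_neg]
  exact (IsUltrametricDist.norm_add_le_max _ _).trans_lt (max_lt ha hb')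

theorem norm_sub_le1 {a b : K} (ha : ‖a‖ ≤ 1) (hb : ‖b‖ ≤ 1) : ‖a - b‖ ≤ 1 := by
  have hb' : ‖-b‖ ≤ 1 := by rwa [norm_neg]
  rw [sub_eq_add_neg]
  exact (IsUltrametricDist.norm_add_le_max _ _).trans (max_le ha hb')

theorem norm_two_le : ‖(2 : K)‖ ≤ 1 := by
  have := IsUltrametricDist.norm_natCast_le_one K 2
  simpa using this

theorem norm_four : ‖(4 : K)‖ = ‖(2 : K)‖ ^ 2 := by rw [← norm_pow]; norm_num

theorem sqrt_approx (h2 : ‖(2 : K)‖ < 1) (u : K) (hu : ‖u‖ ≤ 1) :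
    ∃ s : K, ‖s‖ ≤ 1 ∧ ‖s ^ 2 - u‖ < 1 := by
  obtain ⟨k, _, _, O, r, hO, hsurj, hr⟩ := residue_pkg (K := K)
  have h2' : (2 : k) = 0 := by
    have := (hr (1 + 1)).2 (by push_cast; rw [one_add_one_eq_two]; exact h2)
    rwa [map_add, map_one, one_add_one_eq_two] at this
  obtain ⟨s0, hs0⟩ := ff_sqrt h2' (r ⟨u, (hO u).2 hu⟩)
  obtain ⟨s, rfl⟩ := hsurj s0
  refine ⟨s, (hO _).1 s.2, ?_⟩
  have := (hr (s ^ 2 - ⟨u, (hO u).2 hu⟩)).1 (by rw [map_sub, map_pow, hs0, sub_self])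
  simpa using this

theorem repr_approx (h2 : ‖(2 : K)‖ = 1) (δ u : K) (hδ : ‖δ‖ = 1) (hu : ‖u‖ = 1) :
    ∃ s t : K, ‖s‖ ≤ 1 ∧ ‖t‖ ≤ 1 ∧ ‖s ^ 2 - δ * t ^ 2 - u‖ < 1 := by
  obtain ⟨k, _, _, O, r, hO, hsurj, hr⟩ := residue_pkg (K := K)
  have h2' : (2 : k) ≠ 0 := by
    intro h
    have := (hr (1 + 1)).1 (by rw [map_add, map_one, one_add_one_eq_two, h])
    push_cast at this
    rw [one_add_one_eq_two, h2] at this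
    exact lt_irrefl _ this
  have hδ' : r ⟨δ, (hO δ).2 hδ.le⟩ ≠ 0 := by
    intro h
    have := (hr _).1 h
    simp [hδ] at this
  obtain ⟨s0, t0, hs0⟩ := ff_repr h2' _ (r ⟨u, (hO u).2 hu.le⟩) hδ'
  obtain ⟨s, rfl⟩ := hsurj s0
  obtain ⟨t, rfl⟩ := hsurj t0
  refine ⟨s, t, (hO _).1 s.2, (hO _).1 t.2, ?_⟩
  have := (hr (s ^ 2 - ⟨δ, (hO δ).2 hδ.le⟩ * t ^ 2 - ⟨u, (hO u).2 hu.le⟩)).1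
    (by rw [map_sub, map_sub, map_mul, map_pow, map_pow, hs0, sub_self])
  simpa using this

theorem unit_repr (T N u : K) (hN : ‖N‖ = 1) (hT : ‖T‖ ≤ 1)
    (hd : ‖T ^ 2 - 4 * N‖ = 1) (hu : ‖u‖ = 1) :
    ∃ s t : K, s ^ 2 - T * s * t + N * t ^ 2 = u := by
  have hN0 : N ≠ 0 := by intro h; simp [h] at hN
  rcases lt_or_eq_of_le (norm_two_le (K := K)) with h2 | h2
  · have h4 : ‖(4 : K)‖ < 1 := by rw [norm_four]; nlinarith [norm_nonneg (2 : K)]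
    have h4N : ‖4 * N‖ < 1 := by rw [norm_mul, hN, mul_one]; exact h4
    have hT1 : ‖T‖ = 1 := by
      by_contra h
      have hlt := lt_of_le_of_ne hT h
      have : ‖T ^ 2‖ < 1 := by rw [norm_pow]; nlinarith [norm_nonneg T]
      exact (norm_sub_lt this h4N).ne hd
    obtain ⟨s, hs, hsu⟩ := sqrt_approx h2 u hu.le
    have hs1 : ‖s‖ = 1 := by
      have : ‖u - -(s ^ 2 - u)‖ = 1 := norm_sub_one hu (by rwa [norm_neg])
      have e : u - -(s ^ 2 - u) = s ^ 2 := by ring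
      rw [e, norm_pow] at this
      exact (pow_eq_one_iff_of_nonneg (norm_nonneg _) two_ne_zero).1 this
    have hsuN : ‖(s ^ 2 - u) / N‖ < 1 := by rwa [norm_div, hN, div_one]
    obtain ⟨t, ht⟩ := hensel (T * s / N) ((s ^ 2 - u) / N) 0 (by simp) (by simpa using hsuN) (by
      apply norm_sub_one
      · rw [norm_pow, norm_div, norm_mul, hT1, hs1, hN]; norm_num
      · rw [norm_mul]; nlinarith [norm_nonneg ((s ^ 2 - u) / N), norm_nonneg (4 : K)])
    refine ⟨s, t, ?_⟩
    field_simp at ht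
    linear_combination ht
  · have h20 : (2 : K) ≠ 0 := by intro h; simp [h] at h2
    have h40 : (4 : K) ≠ 0 := by
      have : (4 : K) = 2 * 2 := by norm_num
      rw [this]; exact mul_ne_zero h20 h20
    have h4 : ‖(4 : K)‖ = 1 := by rw [norm_four, h2]; norm_num
    have hδ : ‖(T ^ 2 - 4 * N) / 4‖ = 1 := by rw [norm_div, hd, h4]; norm_num
    obtain ⟨δ, hδd⟩ : ∃ δ, δ = (T ^ 2 - 4 * N) / 4 := ⟨_, rfl⟩
    rw [← hδd] at hδ
    have hδ0 : δ ≠ 0 := by intro h; simp [h] at hδ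
    obtain ⟨s, t, hs, ht, hst⟩ := repr_approx h2 δ u hδ hu
    suffices ∃ s t : K, s ^ 2 - δ * t ^ 2 = u by
      obtain ⟨s, t, h⟩ := this
      refine ⟨s + T * t / 2, t, ?_⟩
      rw [← h, hδd]
      field_simp
      ring
    rcases lt_or_eq_of_le hs with hs1 | hs1
    · have hs2 : ‖s ^ 2‖ < 1 := by rw [norm_pow]; nlinarith [norm_nonneg s]
      have hus : ‖u - s ^ 2‖ = 1 := norm_sub_one hu hs2
      obtain ⟨w, hw⟩ := hensel 0 ((u - s ^ 2) / δ) t ht (by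
        have e : t ^ 2 - 0 * t + (u - s ^ 2) / δ = -((s ^ 2 - δ * t ^ 2 - u) / δ) := by
          field_simp; ring
        rw [e, norm_neg, norm_div, hδ, div_one]; exact hst) (by
        have e : (0 : K) ^ 2 - 4 * ((u - s ^ 2) / δ) = -(4 * ((u - s ^ 2) / δ)) := by ring
        rw [e, norm_neg, norm_mul, norm_div, hus, hδ, h4]; norm_num)
      refine ⟨s, w, ?_⟩
      field_simp at hw
      linear_combination -hw
    · obtain ⟨w, hw⟩ := hensel 0 (-(u + δ * t ^ 2)) s hs (by
        have e : s ^ 2 - 0 * s + -(u + δ * t ^ 2) = s ^ 2 - δ * t ^ 2 - u := by ring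
        rw [e]; exact hst) (by
        have e : (0 : K) ^ 2 - 4 * -(u + δ * t ^ 2) = 4 * (s ^ 2 - (s ^ 2 - δ * t ^ 2 - u)) := by ring
        rw [e, norm_mul, h4, norm_sub_one (by rw [norm_pow, hs1]; norm_num) hst]; norm_num)
      exact ⟨w, t, by linear_combination hw⟩

theorem irr_facts (T N : K) (hN : ‖N‖ = 1) (h : ∀ t : K, 1 ≤ ‖t ^ 2 - T * t + N‖) :
    ‖T‖ ≤ 1 ∧ ‖T ^ 2 - 4 * N‖ = 1 := by
  have hT : ‖T‖ ≤ 1 := by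
    by_contra hT
    push Not at hT
    have hT0 : T ≠ 0 := by intro h; simp [h] at hT; linarith
    have := h (N / T)
    have e : (N / T) ^ 2 - T * (N / T) + N = (N / T) ^ 2 := by field_simp; ring
    rw [e, norm_pow, norm_div, hN] at this
    have h1 : 1 / ‖T‖ < 1 := by rw [div_lt_one (by linarith)]; exact hT
    have h0 : 0 < 1 / ‖T‖ := by positivity
    nlinarith
  refine ⟨hT, ?_⟩
  rcases lt_or_eq_of_le (norm_two_le (K := K)) with h2 | h2
  · have h4 : ‖(4 : K)‖ < 1 := by rw [norm_four]; nlinarith [norm_nonneg (2 : K)]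
    have h4N : ‖4 * N‖ < 1 := by rw [norm_mul, hN, mul_one]; exact h4
    have hT1 : ‖T‖ = 1 := by
      by_contra hne
      have hlt := lt_of_le_of_ne hT hne
      obtain ⟨s, hs, hsu⟩ := sqrt_approx h2 (-N) (by rw [norm_neg, hN])
      have := h s
      have e : s ^ 2 - T * s + N = (s ^ 2 - -N) - T * s := by ring
      rw [e] at this
      have h3 : ‖T * s‖ < 1 := by rw [norm_mul]; nlinarith [norm_nonneg T, norm_nonneg s]
      linarith [norm_sub_lt hsu h3]
    exact norm_sub_one (by rw [norm_pow, hT1]; norm_num) h4N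
  · have h20 : (2 : K) ≠ 0 := by intro h; simp [h] at h2
    have h4 : ‖(4 : K)‖ = 1 := by rw [norm_four, h2]; norm_num
    apply le_antisymm
    · apply norm_sub_le1
      · rw [norm_pow]; nlinarith [norm_nonneg T]
      · rw [norm_mul, h4, hN]; norm_num
    · have := h (T / 2)
      have e : T ^ 2 - 4 * N = -(4 * ((T / 2) ^ 2 - T * (T / 2) + N)) := by field_simp; ring
      rw [e, norm_neg, norm_mul, h4, one_mul]; exact this

theorem embed_lift (T N T' N' : K) (hN : ‖N‖ = 1) (h : ∀ t : K, 1 ≤ ‖t ^ 2 - T * t + N‖)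
    (hN' : ‖N'‖ = 1) (h' : ∀ t : K, 1 ≤ ‖t ^ 2 - T' * t + N'‖) :
    ∃ α β : K, ‖α‖ ≤ 1 ∧ ‖β‖ ≤ 1 ∧ ‖2 * α + β * T' - T‖ < 1 ∧
      ‖α ^ 2 + α * β * T' + β ^ 2 * N' - N‖ < 1 := by
  obtain ⟨hT, -⟩ := irr_facts T N hN h
  obtain ⟨hT', -⟩ := irr_facts T' N' hN' h'
  obtain ⟨k, _, _, O, r, hO, hsurj, hr⟩ := residue_pkg (K := K)
  have conv : ∀ T N : O, (∀ t : K, 1 ≤ ‖t ^ 2 - T * t + N‖) →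
      ∀ t : k, t ^ 2 - r T * t + r N ≠ 0 := by
    intro T N h t ht
    obtain ⟨t, rfl⟩ := hsurj t
    have h1 := (hr (t ^ 2 - T * t + N)).1 (by simpa using ht)
    have h2 := h t
    push_cast at h1
    linarith
  lift T to O using (hO _).2 hT
  lift N to O using (hO _).2 hN.le
  lift T' to O using (hO _).2 hT'
  lift N' to O using (hO _).2 hN'.le
  obtain ⟨α, β, h1, h2⟩ := ff_embed _ _ _ _ (conv T N h) (conv T' N' h')
  obtain ⟨α, rfl⟩ := hsurj α
  obtain ⟨β, rfl⟩ := hsurj β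
  refine ⟨α, β, (hO _).1 α.2, (hO _).1 β.2, ?_, ?_⟩
  · have := (hr ((1 + 1) * α + β * T' - T)).1 (by
      simp only [map_sub, map_add, map_mul, map_one]; rw [one_add_one_eq_two, h1, sub_self])
    push_cast at this
    rwa [one_add_one_eq_two] at this
  · have := (hr (α ^ 2 + α * β * T' + β ^ 2 * N' - N)).1 (by simp [h2])
    simpa using this

theorem exists_min {W : Type} [NormedAddCommGroup W] [NormedSpace K W] [FiniteDimensional K W]
    (ν : W → ℝ) (hc : Continuous ν) (hsm : ∀ (c : K) (w : W), ν (c • w) = ‖c‖ ^ 2 * ν w)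
    (hpos : ∀ w, w ≠ 0 → 0 < ν w) (V : Submodule K W) (hV : V ≠ ⊤) :
    ∃ w, w ≠ 0 ∧ ∀ z ∈ V, ν w ≤ ν (w - z) := by
  have : ProperSpace W := FiniteDimensional.proper K W
  obtain ⟨y, hy⟩ : ∃ y, y ∉ V := by
    by_contra h; push Not at h; exact hV (eq_top_iff.2 fun x _ => h x)
  obtain ⟨c, hc1⟩ := NormedField.exists_one_lt_norm K
  have hy0 : y ≠ 0 := by rintro rfl; exact hy V.zero_mem
  -- shell
  let S : Set W := Metric.closedBall 0 1 ∩ {w | 1 / ‖c‖ ≤ ‖w‖}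
  have hS : IsCompact S := (isCompact_closedBall (0 : W) 1).inter_right
    (isClosed_le continuous_const continuous_norm)
  have shell : ∀ w : W, w ≠ 0 → ∃ d : K, d ≠ 0 ∧ d • w ∈ S := by
    intro w hw
    obtain ⟨d, hd, h1, h2, -⟩ := rescale_to_shell hc1 one_pos hw
    exact ⟨d, hd, by simpa using h1.le, h2⟩
  obtain ⟨d0, _, hd0⟩ := shell y hy0
  obtain ⟨m, hmS, hm⟩ := hS.exists_isMinOn ⟨_, hd0⟩ hc.continuousOn
  have hm0 : m ≠ 0 := by
    rintro rfl
    have := hmS.2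
    simp only [Set.mem_ofPred_eq, norm_zero] at this
    have h3 : 0 < 1 / ‖c‖ := by positivity
    linarith
  have hνm := hpos m hm0
  have coer : ∀ w : W, ν m * ‖w‖ ^ 2 ≤ ν w := by
    intro w
    by_cases hw : w = 0
    · have h0 : ν 0 = 0 := by simpa using hsm 0 0
      simp [hw, h0]
    obtain ⟨d, hd, hdS⟩ := shell w hw
    have h1 := hm hdS
    simp only [Set.mem_ofPred_eq] at h1
    rw [hsm] at h1
    have h2 : ‖d‖ * ‖w‖ ≤ 1 := by simpa [norm_smul] using hdS.1
    have hdp : 0 < ‖d‖ := norm_pos_iff.2 hd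
    have h3 : (‖d‖ * ‖w‖) ^ 2 ≤ 1 := pow_le_one₀ (by positivity) h2
    have h4 : ‖d‖ ^ 2 * (ν m * ‖w‖ ^ 2) ≤ ‖d‖ ^ 2 * ν w := by
      nlinarith
    exact le_of_mul_le_mul_left h4 (by positivity)
  have hVc : IsClosed (V : Set W) := V.closed_of_finiteDimensional
  let C : Set W := {w | y - w ∈ V} ∩ {w | ν w ≤ ν y}
  have hCc : IsClosed C := by
    apply IsClosed.inter
    · exact hVc.preimage (continuous_const.sub continuous_id)
    · exact isClosed_le hc continuous_const
  have hCb : C ⊆ Metric.closedBall 0 (ν y / ν m + 1) := by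
    intro w hw
    have h1 := coer w
    have h2 : ν w ≤ ν y := hw.2
    rw [mem_closedBall_zero_iff]
    have h3 : ‖w‖ ^ 2 ≤ ν y / ν m := by rw [le_div_iff₀ hνm]; linarith
    nlinarith [norm_nonneg w]
  have hC : IsCompact C := (isCompact_closedBall (0 : W) _).of_isClosed_subset hCc hCb
  have hyC : y ∈ C := ⟨by simp, le_refl (ν y)⟩
  obtain ⟨w, hwC, hw⟩ := hC.exists_isMinOn ⟨y, hyC⟩ hc.continuousOn
  have hwV : y - w ∈ V := hwC.1
  refine ⟨w, ?_, ?_⟩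
  · rintro rfl; exact hy (by simpa using hwV)
  · intro z hz
    by_cases hle : ν (w - z) ≤ ν y
    · exact hw (show w - z ∈ C from ⟨by
        have : y - (w - z) = (y - w) + z := by abel
        show y - (w - z) ∈ V
        rw [this]; exact V.add_mem hwV hz, hle⟩)
    · push Not at hle
      exact (hwC.2 : ν w ≤ ν y).trans hle.le

theorem exists_irr {A W : Type} [Ring A] [Algebra K A] [NormedAddCommGroup W] [NormedSpace K W]
    [FiniteDimensional K W] (e : A ≃ₗ[K] W) (ν : A → ℝ)
    (hc : Continuous (fun w => ν (e.symm w))) (h1 : ν 1 = 1)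
    (hmul : ∀ x y, ν (x * y) = ν x * ν y)
    (hsm : ∀ (c : K) x, ν (c • x) = ‖c‖ ^ 2 * ν x) (hpos : ∀ x, x ≠ 0 → 0 < ν x)
    (hinv : ∀ x : A, x ≠ 0 → ∃ y, x * y = 1) (V : Submodule K A) (hV : V ≠ ⊤)
    (hval : ∀ x, x ≠ 0 → ∃ z ∈ V, z ≠ 0 ∧ ν z = ν x) :
    ∃ x, ν x = 1 ∧ ∀ t : K, 1 ≤ ν (x - algebraMap K A t) := by
  obtain ⟨w', hw', hmin'⟩ := exists_min (fun w => ν (e.symm w)) hc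
    (fun c w => by simp [hsm]) (fun w hw => hpos _ (by simpa using hw))
    (V.map (e : A →ₗ[K] W)) (by
      intro h; apply hV
      rw [eq_top_iff]; intro x _
      have : e x ∈ V.map (e : A →ₗ[K] W) := by rw [h]; trivial
      obtain ⟨y, hy, hxy⟩ := this
      rwa [← e.injective hxy])
  obtain ⟨w, rfl⟩ := e.surjective w'
  have hw : w ≠ 0 := by rintro rfl; simp at hw'
  have hmin : ∀ z ∈ V, ν w ≤ ν (w - z) := by
    intro z hz
    have := hmin' (e z) ⟨z, hz, rfl⟩
    simpa using this
  obtain ⟨z, hzV, hz0, hzw⟩ := hval w hw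
  obtain ⟨z', hz'⟩ := hinv z hz0
  have hn : ν z * ν z' = 1 := by rw [← hmul, hz', h1]
  have hzp := hpos z hz0
  have hz'p : 0 < ν z' := by
    by_contra h; push Not at h; nlinarith
  refine ⟨w * z', by rw [hmul, ← hzw, hn], fun t => ?_⟩
  have e : w * z' - algebraMap K A t = (w - t • z) * z' := by
    rw [sub_mul, smul_mul_assoc, hz', Algebra.algebraMap_eq_smul_one]
  rw [e, hmul, ← hn]
  have := hmin (t • z) (V.smul_mem t hzV)
  rw [hzw]
  exact mul_le_mul_of_nonneg_right this hz'p.le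

end LF2

section QE
variable {F E : Type} [NontriviallyNormedField F] [IsUltrametricDist F] [ProperSpace F]
  [NontriviallyNormedField E] [IsUltrametricDist E] [ProperSpace E] [NormedAlgebra F E]

theorem minpoly_quad (hq : Module.finrank F E = 2) (θ : E)
    (hθ : ∀ t : F, θ ≠ algebraMap F E t) :
    ∃ T N : F, θ ^ 2 - algebraMap F E T * θ + algebraMap F E N = 0 ∧
      ∀ t : F, ‖t ^ 2 - T * t + N‖ = ‖θ - algebraMap F E t‖ ^ 2 := by
  have : FiniteDimensional F E := Module.finite_of_finrank_pos (by omega)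
  have hint : IsIntegral F θ := Algebra.IsIntegral.isIntegral θ
  have hdeg : (minpoly F θ).natDegree = 2 := by
    have h1 := minpoly.natDegree_le (A := F) θ
    have h2 := minpoly.natDegree_pos hint
    have h3 : (minpoly F θ).natDegree ≠ 1 := by
      intro h
      rw [minpoly.natDegree_eq_one_iff] at h
      obtain ⟨t, ht⟩ := h
      exact hθ t ht.symm
    omega
  have hmon := minpoly.monic hint
  have hp : minpoly F θ = Polynomial.X ^ 2 + Polynomial.C ((minpoly F θ).coeff 1) * Polynomial.X
      + Polynomial.C ((minpoly F θ).coeff 0) := by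
    have hl : (minpoly F θ).coeff 2 = 1 := by
      have := hmon.coeff_natDegree; rwa [hdeg] at this
    have := (minpoly F θ).as_sum_range_C_mul_X_pow
    rw [hdeg] at this
    simp [Finset.sum_range_succ, hl] at this
    rw [this]; simp [Polynomial.coeff_X, Polynomial.coeff_one, Polynomial.coeff_C]; ring
  refine ⟨-(minpoly F θ).coeff 1, (minpoly F θ).coeff 0, ?_, ?_⟩
  · have h := minpoly.aeval F θ
    rw [hp] at h
    simp only [map_add, map_mul, map_pow, Polynomial.aeval_X, Polynomial.aeval_C] at h
    rw [map_neg]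
    linear_combination h
  · intro t
    have h1 := NormedAlgebra.norm_eq_spectralNorm F (θ - algebraMap F E t)
    rw [spectralNorm.spectralNorm_eq_norm_coeff_zero_rpow, minpoly.sub_algebraMap] at h1
    have hnd : ((minpoly F θ).comp (Polynomial.X + Polynomial.C t)).natDegree = 2 := by
      rw [Polynomial.natDegree_comp, hdeg]; simp
    rw [hnd, Polynomial.coeff_zero_eq_eval_zero, Polynomial.eval_comp] at h1
    rw [h1, ← Real.rpow_natCast, ← Real.rpow_mul (norm_nonneg _)]
    have e : (minpoly F θ).eval t = t ^ 2 - -(minpoly F θ).coeff 1 * t + (minpoly F θ).coeff 0 := by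
      conv_lhs => rw [hp]
      simp
    simp [e]

theorem norm_sq_mem (hq : Module.finrank F E = 2) (g : E) : ∃ y : F, ‖y‖ = ‖g‖ ^ 2 := by
  by_cases h : ∃ t : F, g = algebraMap F E t
  · obtain ⟨t, rfl⟩ := h
    exact ⟨t ^ 2, by rw [norm_pow, norm_algebraMap']⟩
  · push Not at h
    obtain ⟨T, N, -, h2⟩ := minpoly_quad hq g h
    exact ⟨N, by simpa using h2 0⟩

theorem E_dich (hq : Module.finrank F E = 2) (T N : F) (hN : ‖N‖ = 1)
    (h : ∀ t : F, 1 ≤ ‖t ^ 2 - T * t + N‖) :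
    (∃ w : E, w ^ 2 - algebraMap F E T * w + algebraMap F E N = 0) ∨
      ∀ c : F, c ≠ 0 → ∃ g : E, g ≠ 0 ∧ ‖c‖ = ‖g‖ ^ 2 := by
  have : FiniteDimensional F E := Module.finite_of_finrank_pos (by omega)
  obtain ⟨hT, hd⟩ := irr_facts T N hN h
  by_cases H : ∃ g : E, g ≠ 0 ∧ ¬ ∃ t : F, t ≠ 0 ∧ ‖g‖ ^ 2 = ‖t‖ ^ 2
  · right
    obtain ⟨g, hg0, hg⟩ := H
    intro c hc
    obtain ⟨y, hy⟩ := norm_sq_mem hq g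
    have hy0 : y ≠ 0 := by
      rintro rfl
      rw [norm_zero] at hy
      have : 0 < ‖g‖ := norm_pos_iff.2 hg0
      nlinarith
    rcases parity c y hc hy0 with ⟨t, ht, h1⟩ | ⟨t, ht, h1⟩ | ⟨t, ht, h1⟩
    · exact ⟨algebraMap F E t, by simpa using ht, by rw [norm_algebraMap', h1]⟩
    · exact absurd ⟨t, ht, by rw [← hy, h1]⟩ hg
    · refine ⟨g * algebraMap F E t, mul_ne_zero hg0 (by simpa using ht), ?_⟩
      rw [norm_mul, norm_algebraMap', h1, hy]; ring
  · left
    push Not at H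
    obtain ⟨θ, hθ1, hθ⟩ := exists_irr (K := F) (A := E) (W := E) (LinearEquiv.refl F E)
      (fun z => ‖z‖ ^ 2) (by simp only [LinearEquiv.refl_symm, LinearEquiv.refl_apply]; fun_prop)
      (by simp) (by intro x y; simp [mul_pow])
      (by intro c x; simp [norm_smul, mul_pow])
      (by intro x hx; have := norm_pos_iff.2 hx; positivity)
      (fun x hx => ⟨x⁻¹, mul_inv_cancel₀ hx⟩)
      (Submodule.span F {1}) (by
        intro htop
        have h1 := finrank_span_singleton (K := F) (one_ne_zero (α := E))
        rw [htop, finrank_top] at h1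
        omega)
      (by
        intro x hx
        obtain ⟨t, ht, hxt⟩ := H x hx
        refine ⟨algebraMap F E t, ?_, by simpa using ht, by simp [hxt]⟩
        rw [Algebra.algebraMap_eq_smul_one]
        exact Submodule.smul_mem _ _ (Submodule.mem_span_singleton_self 1))
    obtain ⟨T', N', hrel, hn⟩ := minpoly_quad hq θ (by
      intro t ht
      have := hθ t
      rw [ht, sub_self] at this
      norm_num at this)
    have hN' : ‖N'‖ = 1 := by have := hn 0; simpa [hθ1] using this
    obtain ⟨α, β, hα, hβ, e1, e2⟩ := embed_lift T N T' N' hN h hN' (fun t => by rw [hn t]; exact hθ t)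
    have hθn : ‖θ‖ = 1 := (pow_eq_one_iff_of_nonneg (norm_nonneg _) two_ne_zero).1 hθ1
    have hz : ‖algebraMap F E α - -(algebraMap F E β * θ)‖ ≤ 1 := by
      apply norm_sub_le1
      · rwa [norm_algebraMap']
      · rw [norm_neg, norm_mul, norm_algebraMap', hθn, mul_one]; exact hβ
    apply hensel (algebraMap F E T) (algebraMap F E N)
      (algebraMap F E α - -(algebraMap F E β * θ)) hz
    · have e : (algebraMap F E α - -(algebraMap F E β * θ)) ^ 2
          - algebraMap F E T * (algebraMap F E α - -(algebraMap F E β * θ)) + algebraMap F E N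
          = algebraMap F E (2 * α + β * T' - T) * (algebraMap F E α - -(algebraMap F E β * θ))
            - algebraMap F E (α ^ 2 + α * β * T' + β ^ 2 * N' - N) := by
        simp only [map_sub, map_add, map_mul, map_pow, map_ofNat]
        linear_combination (algebraMap F E β) ^ 2 * hrel
      rw [e]
      apply norm_sub_lt
      · rw [norm_mul, norm_algebraMap']
        nlinarith [norm_nonneg (2 * α + β * T' - T),
          norm_nonneg (algebraMap F E α - -(algebraMap F E β * θ))]
      · rwa [norm_algebraMap']
    · have e : algebraMap F E T ^ 2 - 4 * algebraMap F E N = algebraMap F E (T ^ 2 - 4 * N) := by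
        simp only [map_sub, map_mul, map_pow, map_ofNat]
      rw [e, norm_algebraMap', hd]

open QuaternionAlgebra in
theorem quat (h2 : (2 : F) ≠ 0) (e a : F)
    (han : ∀ z0 z1 z2 z3 : F, z0 ^ 2 - e * z1 ^ 2 - a * z2 ^ 2 + a * e * z3 ^ 2 = 0 →
      z0 = 0 ∧ z1 = 0 ∧ z2 = 0 ∧ z3 = 0) :
    ∃ x0 x1 x2 x3 : F, ‖x0 ^ 2 - e * x1 ^ 2 - a * x2 ^ 2 + a * e * x3 ^ 2‖ = 1 ∧
      ∀ t : F, 1 ≤ ‖t ^ 2 - 2 * x0 * t + (x0 ^ 2 - e * x1 ^ 2 - a * x2 ^ 2 + a * e * x3 ^ 2)‖ := by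
  let q : QuaternionAlgebra F e 0 a → F := fun z =>
    z.re ^ 2 - e * z.imI ^ 2 - a * z.imJ ^ 2 + a * e * z.imK ^ 2
  have hq0 : ∀ z, z ≠ 0 → q z ≠ 0 := by
    intro z hz h
    obtain ⟨h0, h1, h2, h3⟩ := han _ _ _ _ h
    exact hz (by ext <;> assumption)
  have qmul : ∀ x y, q (x * y) = q x * q y := by
    intro x y; simp [q]; ring
  have qsm : ∀ (c : F) x, q (c • x) = c ^ 2 * q x := by
    intro c x; simp [q]; ring
  have q1 : q 1 = 1 := by simp [q]
  obtain ⟨V, hV, hval⟩ : ∃ V : Submodule F (QuaternionAlgebra F e 0 a), V ≠ ⊤ ∧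
      ∀ x, x ≠ 0 → ∃ z ∈ V, z ≠ 0 ∧ ‖q z‖ = ‖q x‖ := by
    by_cases H : ∃ P, P ≠ 0 ∧ ¬ ∃ t : F, t ≠ 0 ∧ ‖q P‖ = ‖t‖ ^ 2
    · obtain ⟨P, hP0, hP⟩ := H
      refine ⟨Submodule.span F {1, P}, ?_, ?_⟩
      · intro htop
        have h1 : Module.finrank F (Submodule.span F ({1, P} : Set (QuaternionAlgebra F e 0 a))) ≤ 2 := by
          classical
          have h := finrank_span_finset_le_card (R := F) ({1, P} : Finset (QuaternionAlgebra F e 0 a))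
          have h' := Finset.card_le_two (a := (1 : QuaternionAlgebra F e 0 a)) (b := P)
          simp only [Finset.coe_insert, Finset.coe_singleton] at h
          exact h.trans h'
        rw [htop, finrank_top, finrank_eq_four] at h1
        omega
      · intro x hx
        rcases parity (q x) (q P) (hq0 x hx) (hq0 P hP0) with ⟨t, ht, h1⟩ | ⟨t, ht, h1⟩ | ⟨t, ht, h1⟩
        · refine ⟨t • 1, Submodule.smul_mem _ _ (Submodule.subset_span (by simp)),
            smul_ne_zero ht one_ne_zero, ?_⟩
          rw [qsm, q1, h1]; simp
        · exact absurd ⟨t, ht, h1⟩ hP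
        · refine ⟨t • P, Submodule.smul_mem _ _ (Submodule.subset_span (by simp)),
            smul_ne_zero ht hP0, ?_⟩
          rw [qsm, h1]; simp; ring
    · push Not at H
      refine ⟨Submodule.span F {1}, ?_, ?_⟩
      · intro htop
        have h1 := finrank_span_singleton (K := F) (one_ne_zero (α := QuaternionAlgebra F e 0 a))
        rw [htop, finrank_top, finrank_eq_four] at h1
        omega
      · intro x hx
        obtain ⟨t, ht, hxt⟩ := H x hx
        refine ⟨t • 1, Submodule.smul_mem _ _ (Submodule.subset_span (by simp)),
            smul_ne_zero ht one_ne_zero, ?_⟩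
        rw [qsm, q1, hxt]; simp
  obtain ⟨x, hx1, hx⟩ := exists_irr (K := F) (A := QuaternionAlgebra F e 0 a) (W := Fin 4 → F)
    (linearEquivTuple e 0 a) (fun z => ‖q z‖) (by
      have : ∀ w : Fin 4 → F, q ((linearEquivTuple e 0 a).symm w) =
        w 0 ^ 2 - e * w 1 ^ 2 - a * w 2 ^ 2 + a * e * w 3 ^ 2 := fun w => rfl
      simp only [this]
      fun_prop) (by simp [q1]) (by intro x y; simp [qmul]) (by intro c x; simp [qsm])
      (fun x hx => norm_pos_iff.2 (hq0 x hx))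
      (by
        intro x hx
        have := hq0 x hx
        refine ⟨(q x)⁻¹ • ⟨x.re, -x.imI, -x.imJ, -x.imK⟩, ?_⟩
        rw [mul_smul_comm, inv_smul_eq_iff₀ this]
        ext <;> simp [q] <;> ring) V hV hval
  refine ⟨x.re, x.imI, x.imJ, x.imK, hx1, fun t => ?_⟩
  have := hx t
  have e : q (x - algebraMap F _ t) = t ^ 2 - 2 * x.re * t +
      (x.re ^ 2 - e * x.imI ^ 2 - a * x.imJ ^ 2 + a * e * x.imK ^ 2) := by
    rw [Algebra.algebraMap_eq_smul_one]; simp [q]; ring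
  rwa [e] at this

theorem orth (e a x1 x2 x3 : F) : ∃ y1 y2 y3 : F, (y1 ≠ 0 ∨ y2 ≠ 0 ∨ y3 ≠ 0) ∧
    - e * x1 * y1 - a * x2 * y2 + a * e * x3 * y3 = 0 := by
  by_cases h : - e * x1 = 0
  · exact ⟨1, 0, 0, by simp, by simp [h]⟩
  · exact ⟨a * x2, - e * x1, 0, by tauto, by ring⟩

theorem iso_E (h2 : (2 : F) ≠ 0) (hq : Module.finrank F E = 2) (e a : F) :
    ∃ z0 z1 z2 z3 : E, (z0 ≠ 0 ∨ z1 ≠ 0 ∨ z2 ≠ 0 ∨ z3 ≠ 0) ∧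
      z0 ^ 2 - algebraMap F E e * z1 ^ 2 - algebraMap F E a * z2 ^ 2
        + algebraMap F E a * algebraMap F E e * z3 ^ 2 = 0 := by
  have inj := (algebraMap F E).injective
  by_cases han : ∀ z0 z1 z2 z3 : F, z0 ^ 2 - e * z1 ^ 2 - a * z2 ^ 2 + a * e * z3 ^ 2 = 0 →
      z0 = 0 ∧ z1 = 0 ∧ z2 = 0 ∧ z3 = 0
  swap
  · push Not at han
    obtain ⟨z0, z1, z2, z3, h1, h3⟩ := han
    refine ⟨algebraMap F E z0, algebraMap F E z1, algebraMap F E z2, algebraMap F E z3, ?_, ?_⟩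
    · simp only [ne_eq, FaithfulSMul.algebraMap_eq_zero_iff]; tauto
    · have := congrArg (algebraMap F E) h1
      simpa using this
  obtain ⟨x0, x1, x2, x3, hN, hirr⟩ := quat h2 e a han
  obtain ⟨y1, y2, y3, hy, horth⟩ := orth e a x1 x2 x3
  obtain ⟨hT, hd⟩ := irr_facts _ _ hN hirr
  have hnon : ¬ (x1 = 0 ∧ x2 = 0 ∧ x3 = 0) := by
    rintro ⟨rfl, rfl, rfl⟩
    have := hirr x0
    have e : x0 ^ 2 - 2 * x0 * x0 + (x0 ^ 2 - e * 0 ^ 2 - a * 0 ^ 2 + a * e * 0 ^ 2) = 0 := by ring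
    rw [e, norm_zero] at this
    norm_num at this
  have hyN : - e * y1 ^ 2 - a * y2 ^ 2 + a * e * y3 ^ 2 ≠ 0 := by
    intro h
    obtain ⟨-, h1, h2, h3⟩ := han 0 y1 y2 y3 (by linear_combination h)
    tauto
  obtain ⟨N, hNd⟩ : ∃ N, N = x0 ^ 2 - e * x1 ^ 2 - a * x2 ^ 2 + a * e * x3 ^ 2 := ⟨_, rfl⟩
  rw [← hNd] at hN hd hirr
  have hNE := congrArg (algebraMap F E) hNd
  have horthE := congrArg (algebraMap F E) horth
  simp only [map_sub, map_add, map_mul, map_pow, map_neg, map_zero] at hNE horthE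
  rcases E_dich (E := E) hq (2 * x0) N hN hirr with ⟨w, hw⟩ | hE
  · refine ⟨w - algebraMap F E x0, - algebraMap F E x1, - algebraMap F E x2, - algebraMap F E x3,
      ?_, ?_⟩
    · simp only [ne_eq, neg_eq_zero, FaithfulSMul.algebraMap_eq_zero_iff]; tauto
    · simp only [map_mul, map_ofNat] at hw
      rw [hNE] at hw
      linear_combination hw
  · obtain ⟨g, hg0, hg⟩ := hE _ (neg_ne_zero.2 hyN)
    obtain ⟨c, hc⟩ : ∃ c, c = -(-e * y1 ^ 2 - a * y2 ^ 2 + a * e * y3 ^ 2) := ⟨_, rfl⟩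
    rw [← hc] at hg
    have hcE := congrArg (algebraMap F E) hc
    simp only [map_sub, map_add, map_mul, map_pow, map_neg] at hcE
    have hgp : 0 < ‖g‖ := norm_pos_iff.2 hg0
    obtain ⟨s, t, hst⟩ := unit_repr (algebraMap F E (2 * x0)) (algebraMap F E N)
      (algebraMap F E c / g ^ 2) (by rwa [norm_algebraMap']) (by rwa [norm_algebraMap'])
      (by
        have e : algebraMap F E (2 * x0) ^ 2 - 4 * algebraMap F E N
          = algebraMap F E ((2 * x0) ^ 2 - 4 * N) := by simp only [map_sub, map_mul, map_pow, map_ofNat]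
        rw [e, norm_algebraMap', hd])
      (by rw [norm_div, norm_pow, norm_algebraMap', hg]; field_simp)
    rw [eq_div_iff (pow_ne_zero 2 hg0)] at hst
    simp only [map_mul, map_ofNat] at hst
    refine ⟨g * (s - t * algebraMap F E x0), - (g * t * algebraMap F E x1) + algebraMap F E y1,
      - (g * t * algebraMap F E x2) + algebraMap F E y2,
      - (g * t * algebraMap F E x3) + algebraMap F E y3, ?_, ?_⟩
    · by_contra hcon
      push Not at hcon
      obtain ⟨-, h1, h2, h3⟩ := hcon
      apply hyN
      apply inj
      simp only [map_sub, map_add, map_mul, map_pow, map_neg, map_zero]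
      linear_combination g * t * horthE - algebraMap F E e * algebraMap F E y1 * h1
        - algebraMap F E a * algebraMap F E y2 * h2
        + algebraMap F E a * algebraMap F E e * algebraMap F E y3 * h3
    · rw [hcE, hNE] at hst
      linear_combination hst - 2 * g * t * horthE

end QE

theorem bridge_norm (p : ℕ) [Fact p.Prime] (F E : Type) [Field F] [Field E]
    [Algebra ℚ_[p] F] [FiniteDimensional ℚ_[p] F]
    [Algebra ℚ_[p] E] [FiniteDimensional ℚ_[p] E] [Algebra F E] [IsScalarTower ℚ_[p] F E]
    (hq : Module.finrank F E = 2) (e a : F) :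
    ∃ z0 z1 z2 z3 : E, (z0 ≠ 0 ∨ z1 ≠ 0 ∨ z2 ≠ 0 ∨ z3 ≠ 0) ∧
      z0^2 - algebraMap F E e * z1^2 - algebraMap F E a * z2^2
        + algebraMap F E a * algebraMap F E e * z3^2 = 0 := by
  have h2 : (2 : F) ≠ 0 := by
    have : CharZero F := charZero_of_injective_algebraMap (algebraMap ℚ_[p] F).injective
    exact two_ne_zero
  let nF : NontriviallyNormedField F := spectralNorm.nontriviallyNormedField ℚ_[p] F
  let nE : NontriviallyNormedField E := spectralNorm.nontriviallyNormedField ℚ_[p] E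
  let : NormedAlgebra ℚ_[p] F := spectralNorm.normedAlgebra ℚ_[p] F
  let : NormedAlgebra ℚ_[p] E := spectralNorm.normedAlgebra ℚ_[p] E
  let : NormedAlgebra F E := spectralNorm.normedAlgebra' ℚ_[p] F E
  have : ProperSpace F := FiniteDimensional.proper ℚ_[p] F
  have : ProperSpace E := FiniteDimensional.proper ℚ_[p] E
  have : IsUltrametricDist F := IsUltrametricDist.isUltrametricDist_of_forall_norm_add_le_max_norm
    (isNonarchimedean_spectralNorm (K := ℚ_[p]) (L := F))
  have : IsUltrametricDist E := IsUltrametricDist.isUltrametricDist_of_forall_norm_add_le_max_norm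
    (isNonarchimedean_spectralNorm (K := ℚ_[p]) (L := E))
  exact iso_E h2 hq e a

theorem galois_part (F E L : Type) [Field F] [Field E] [Field L]
    [Algebra F E] [Algebra E L] [Algebra F L] [IsScalarTower F E L] [IsGalois F L]
    [FiniteDimensional F L] (h2 : (2:L) ≠ 0)
    (hKlein : Nonempty ((L ≃ₐ[F] L) ≃* Multiplicative (ZMod 2 × ZMod 2)))
    (hquad : Module.finrank F E = 2) :
    ∃ (e : F) (f : L), f ∉ Set.range (algebraMap E L) ∧ ∀ x y : E,
      Algebra.norm E (algebraMap E L x + algebraMap E L y * f) = x^2 - algebraMap F E e * y^2 := by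
  obtain ⟨φ⟩ := hKlein
  have hc : ∀ g h : L ≃ₐ[F] L, g * h = h * g := fun g h => φ.injective (by simp [mul_comm])
  have hs : ∀ g : L ≃ₐ[F] L, g * g = 1 := fun g => φ.injective (by
    rw [map_mul, map_one]; generalize φ g = x; revert x; decide)
  have hcard : Nat.card (L ≃ₐ[F] L) = 4 := by
    rw [Nat.card_congr φ.toEquiv]; simp [Nat.card_eq_fintype_card]
  have hFL : Module.finrank F L = 4 := by rw [← IsGalois.card_aut_eq_finrank, hcard]
  have : FiniteDimensional F E := Module.finite_of_finrank_pos (by omega)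
  have : FiniteDimensional E L := Module.Finite.of_restrictScalars_finite F E L
  have hEL : Module.finrank E L = 2 := by
    have := Module.finrank_mul_finrank F E L
    rw [hquad, hFL] at this; omega
  have : IsGalois E L := IsGalois.tower_top_of_isGalois F E L
  have hcE : Nat.card (L ≃ₐ[E] L) = 2 := by rw [IsGalois.card_aut_eq_finrank, hEL]
  obtain ⟨t, ht1, htu⟩ := (Nat.card_eq_two_iff' (1 : L ≃ₐ[E] L)).1 hcE
  let τ : L ≃ₐ[F] L := t.restrictScalars F
  have hτ : ∀ x, τ x = t x := fun _ => rfl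
  have hτ1 : τ ≠ 1 := fun h => ht1 (by ext x; exact DFunLike.congr_fun h x)
  obtain ⟨σ, hσ⟩ : ∃ σ : L ≃ₐ[F] L, σ ≠ 1 ∧ σ ≠ τ := by
    by_contra! hcon
    have : Nat.card (L ≃ₐ[F] L) ≤ 2 := by
      have hle : (Set.univ : Set (L ≃ₐ[F] L)) ⊆ {1, τ} := fun g _ => by
        by_cases hg : g = 1
        · simp [hg]
        · simp [hcon g hg]
      have h3 := Set.ncard_le_ncard hle (by simp)
      rw [Set.ncard_univ] at h3
      exact h3.trans (Set.ncard_insert_le _ _ |>.trans (by simp))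
    omega
  have hcg : ∀ (g h : L ≃ₐ[F] L) (x : L), g (h x) = h (g x) := fun g h x => DFunLike.congr_fun (hc g h) x
  have hsg : ∀ (g : L ≃ₐ[F] L) (x : L), g (g x) = x := fun g x => DFunLike.congr_fun (hs g) x
  obtain ⟨z, hz1, hz2⟩ : ∃ z : L, σ z = z ∧ τ z ≠ z := by
    by_contra! hcon
    have h1 : IntermediateField.fixedField (Subgroup.zpowers σ) ≤
        IntermediateField.fixedField (Subgroup.zpowers τ) := by
      intro x hx
      rw [IntermediateField.mem_fixedField_iff] at hx ⊢
      have := hcon x (hx σ (Subgroup.mem_zpowers σ))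
      intro g hg
      obtain ⟨k, rfl⟩ := Subgroup.mem_zpowers_iff.1 hg
      rcases Int.even_or_odd' k with ⟨m, rfl | rfl⟩
      · rw [zpow_mul, zpow_two, hs, one_zpow]; rfl
      · rw [zpow_add, zpow_mul, zpow_two, hs, one_zpow, one_mul, zpow_one]; exact this
    have h2 := IntermediateField.fixingSubgroup_antitone h1
    simp only [IntermediateField.fixingSubgroup_fixedField] at h2
    have h3 := h2 (Subgroup.mem_zpowers τ)
    obtain ⟨k, hk⟩ := Subgroup.mem_zpowers_iff.1 h3
    rcases Int.even_or_odd' k with ⟨m, rfl | rfl⟩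
    · rw [zpow_mul, zpow_two, hs, one_zpow] at hk; exact hτ1 hk.symm
    · rw [zpow_add, zpow_mul, zpow_two, hs, one_zpow, one_mul, zpow_one] at hk; exact hσ.2 hk
  set f := z - τ z with hf
  have hf0 : f ≠ 0 := sub_ne_zero.2 (Ne.symm hz2)
  have hσf : σ f = f := by rw [hf, map_sub, hcg σ τ, hz1]
  have hτf : τ f = -f := by rw [hf, map_sub, hsg]; ring
  have hall : ∀ g : L ≃ₐ[F] L, g (f^2) = f^2 := by
    have hσff : σ (f^2) = f^2 := by rw [map_pow, hσf]
    have hτff : τ (f^2) = f^2 := by rw [map_pow, hτf]; ring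
    have key : ∀ x y g : Multiplicative (ZMod 2 × ZMod 2), x ≠ 1 → y ≠ 1 → y ≠ x →
        g = 1 ∨ g = x ∨ g = y ∨ g = y * x := by decide
    intro g
    have hk := key (φ τ) (φ σ) (φ g) (by simpa using hτ1) (by simpa using hσ.1)
      (by simpa using hσ.2)
    rw [← map_mul, ← map_one φ] at hk
    simp only [φ.injective.eq_iff] at hk
    rcases hk with rfl | rfl | rfl | rfl
    · rfl
    · exact hτff
    · exact hσff
    · rw [AlgEquiv.mul_apply, hτff, hσff]
  obtain ⟨e, he⟩ := (IsGalois.mem_range_algebraMap_iff_fixed (F := F) (f^2)).2 hall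
  refine ⟨e, f, ?_, ?_⟩
  · rintro ⟨x, hx⟩
    have h1 : τ f = f := by rw [← hx, hτ, t.commutes]
    rw [hτf] at h1
    have : 2 * f = 0 := by linear_combination - h1
    exact (mul_ne_zero h2 hf0) this
  · intro x y
    apply (algebraMap E L).injective
    rw [Algebra.norm_eq_prod_automorphisms]
    classical
    have huniv : (Finset.univ : Finset (L ≃ₐ[E] L)) = {1, t} := by
      ext g
      by_cases hg : g = 1
      · simp [hg]
      · simp [hg, htu g hg]
    have huf : t f = -f := hτf
    rw [huniv, Finset.prod_pair (Ne.symm ht1)]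
    simp only [AlgEquiv.one_apply, map_add, map_mul, t.commutes, huf, map_sub, map_pow,
      ← IsScalarTower.algebraMap_apply F E L, he]
    ring

end BQ

/-- Let `L/F` be a Galois extension of non-archimedean local fields of
characteristic zero (finite extensions of `ℚ_[p]`) whose Galois group is isomorphic to the
Klein four-group `ℤ/2 × ℤ/2`, and let `E` be a quadratic extension of `F` contained in `L`.
Then every element of `F^×` is a norm from `L` to `E`. -/
theorem stmt_0 (p : ℕ) [Fact p.Prime]
    (F E L : Type) [Field F] [Field E] [Field L]
    [Algebra ℚ_[p] F] [FiniteDimensional ℚ_[p] F]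
    [Algebra ℚ_[p] E] [FiniteDimensional ℚ_[p] E]
    [Algebra ℚ_[p] L] [FiniteDimensional ℚ_[p] L]
    [Algebra F E] [Algebra E L] [Algebra F L] [IsScalarTower F E L]
    [IsScalarTower ℚ_[p] F E] [IsScalarTower ℚ_[p] E L]
    [IsGalois F L]
    (hKlein : Nonempty ((L ≃ₐ[F] L) ≃* Multiplicative (ZMod 2 × ZMod 2)))
    (hquad : Module.finrank F E = 2)
    (a : F) (ha : a ≠ 0) :
    ∃ x : L, Algebra.norm E x = algebraMap F E a := by
  have h2 : (2 : L) ≠ 0 := by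
    have : CharZero L := charZero_of_injective_algebraMap (algebraMap ℚ_[p] L).injective
    exact two_ne_zero
  have : IsScalarTower ℚ_[p] F L := IsScalarTower.of_algebraMap_eq (fun x => by
    rw [IsScalarTower.algebraMap_apply ℚ_[p] E L, IsScalarTower.algebraMap_apply ℚ_[p] F E,
      ← IsScalarTower.algebraMap_apply F E L])
  have : FiniteDimensional F L := Module.Finite.of_restrictScalars_finite ℚ_[p] F L
  obtain ⟨e, f, hf, hN⟩ := BQ.galois_part F E L h2 hKlein hquad
  obtain ⟨z0, z1, z2, z3, hz, hrel⟩ := BQ.bridge_norm p F E hquad e a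
  have hnz : ∀ x y : E, algebraMap E L x + algebraMap E L y * f = 0 → x = 0 ∧ y = 0 := by
    intro x y h
    have hy : y = 0 := by
      by_contra hy
      have hy2 : algebraMap E L y ≠ 0 := by simpa using hy
      apply hf
      refine ⟨- x / y, ?_⟩
      rw [map_div₀, map_neg, div_eq_iff hy2]
      linear_combination - h
    subst hy
    refine ⟨?_, rfl⟩
    simpa using h
  have : FiniteDimensional E L := Module.Finite.of_restrictScalars_finite F E L
  have hn1 := hN z0 z1
  have hn2 := hN z2 z3
  have haE : algebraMap F E a ≠ 0 := by simpa using ha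
  have hrel2 : Algebra.norm E (algebraMap E L z0 + algebraMap E L z1 * f) =
      algebraMap F E a * Algebra.norm E (algebraMap E L z2 + algebraMap E L z3 * f) := by
    rw [hn1, hn2]; linear_combination hrel
  have hβ : algebraMap E L z2 + algebraMap E L z3 * f ≠ 0 := by
    intro h
    obtain ⟨h2', h3'⟩ := hnz _ _ h
    rw [h, Algebra.norm_zero, mul_zero, Algebra.norm_eq_zero_iff] at hrel2
    obtain ⟨h0', h1'⟩ := hnz _ _ hrel2
    tauto
  refine ⟨(algebraMap E L z0 + algebraMap E L z1 * f) /
    (algebraMap E L z2 + algebraMap E L z3 * f), ?_⟩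
  have hβn : Algebra.norm E (algebraMap E L z2 + algebraMap E L z3 * f) ≠ 0 :=
    Algebra.norm_ne_zero_iff.2 hβ
  apply mul_right_cancel₀ hβn
  rw [← map_mul, div_mul_cancel₀ _ hβ, hrel2]
end

section
/- Let K/k be a quadratic extension of non-archimedean local fields of characteristic zero with Galois involution ρ, let ε ∈ {±1}, n ≥ 1, and let y ∈ GL_n(K) satisfy transpose(ρ(y)) = ε·y (ρ applied entrywise). Then for every a ∈ K^× with a·ρ(a) = 1 there exists h ∈ GL_n(K) with transpose(ρ(h))·y·h = y and det h = a. -/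
open Matrix

theorem aux_sq {k K : Type} [Field k] [Field K] [Algebra k K] (hquad : Module.finrank k K = 2)
    (ρ : K ≃ₐ[k] K) (hρ : ρ ≠ 1) (x : K) : ρ (ρ x) = x := by
  have : FiniteDimensional k K := FiniteDimensional.of_finrank_pos (by omega)
  have h1 : Fintype.card (K ≃ₐ[k] K) ≤ 2 := hquad ▸ AlgEquiv.card_le
  have h2 : orderOf ρ ≤ 2 := (orderOf_le_card_univ).trans h1
  have h3 : orderOf ρ ≠ 1 := fun h => hρ (orderOf_eq_one_iff.mp h)
  have h4 : 0 < orderOf ρ := orderOf_pos ρ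
  have h5 : ρ ^ 2 = 1 := by
    have : orderOf ρ = 2 := by omega
    rw [← this]; exact pow_orderOf_eq_one ρ
  have := DFunLike.congr_fun h5 x
  simpa [pow_two] using this

theorem aux_aniso {k K : Type} [Field k] [Field K] [Algebra k K]
    (ρ : K ≃ₐ[k] K) (hρ : ρ ≠ 1) (n : ℕ) (y : Matrix (Fin n) (Fin n) K) (hy : y ≠ 0) :
    ∃ v : Fin n → K, (fun i => ρ (v i)) ⬝ᵥ (y *ᵥ v) ≠ 0 := by
  by_contra! H
  obtain ⟨t, ht⟩ : ∃ t, ρ t ≠ t := by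
    by_contra! h
    exact hρ (AlgEquiv.ext h)
  have hs : ∀ v : Fin n → K, ∀ s : K, (fun i => ρ ((s • v) i)) = ρ s • (fun i => ρ (v i)) := by
    intro v s; ext i; simp
  have pol : ∀ u v : Fin n → K, (fun i => ρ (u i)) ⬝ᵥ (y *ᵥ v) + (fun i => ρ (v i)) ⬝ᵥ (y *ᵥ u) = 0 := by
    intro u v
    have h := H (u + v)
    have e : (fun i => ρ ((u + v) i)) = (fun i => ρ (u i)) + (fun i => ρ (v i)) := by
      ext i; simp
    rw [e, mulVec_add, add_dotProduct, dotProduct_add, dotProduct_add, H u, H v] at h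
    simpa using h
  apply hy
  have key : ∀ u v : Fin n → K, (fun i => ρ (u i)) ⬝ᵥ (y *ᵥ v) = 0 := by
    intro u v
    have h1 := pol u v
    have h2 := pol u (t • v)
    rw [hs, mulVec_smul, dotProduct_smul, smul_dotProduct, smul_eq_mul, smul_eq_mul] at h2
    have h3 : (t - ρ t) * ((fun i => ρ (u i)) ⬝ᵥ (y *ᵥ v)) = 0 := by
      linear_combination h2 - ρ t * h1
    rcases mul_eq_zero.mp h3 with h | h
    · exact absurd (sub_eq_zero.mp h).symm ht
    · exact h
  ext i j
  have h := key (Pi.single i 1) (Pi.single j 1)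
  have e : (fun l => ρ ((Pi.single i 1 : Fin n → K) l)) = Pi.single i 1 := by
    ext l; by_cases hl : l = i
    · subst hl; simp
    · simp [hl]
  rw [e] at h
  simpa using h

theorem stmt_2 (p : ℕ) [Fact p.Prime]
    (k K : Type) [Field k] [Field K]
    [Algebra ℚ_[p] k] [FiniteDimensional ℚ_[p] k]
    [Algebra k K] (hquad : Module.finrank k K = 2)
    (ρ : K ≃ₐ[k] K) (hρ : ρ ≠ 1)
    (ε : K) (hε : ε = 1 ∨ ε = -1)
    (n : ℕ) (hn : 1 ≤ n)
    (y : Matrix (Fin n) (Fin n) K) (hy : IsUnit y)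
    (hherm : (y.map ⇑ρ)ᵀ = ε • y)
    (a : K) (ha : a * ρ a = 1) :
    ∃ h : Matrix (Fin n) (Fin n) K, (h.map ⇑ρ)ᵀ * y * h = y ∧ h.det = a := by
  have : Nonempty (Fin n) := ⟨⟨0, hn⟩⟩
  obtain ⟨v, hv⟩ := aux_aniso ρ hρ n y hy.ne_zero
  have hε2 : ε * ε = 1 := by rcases hε with h | h <;> simp [h]
  have hε0 : ε ≠ 0 := by rintro rfl; simp at hε2
  have hyij : ∀ i j, ρ (y i j) = ε * y j i := fun i j => congrFun (congrFun hherm j) i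
  have hsq := aux_sq hquad ρ hρ
  set v' : Fin n → K := fun i => ρ (v i) with hv'
  set w : Fin n → K := v' ᵥ* y with hw
  have hwρ : ∀ j, ρ (w j) = ε * (y *ᵥ v) j := by
    intro j
    simp only [hw, hv', vecMul, mulVec, dotProduct, map_sum, map_mul, hsq, hyij, Finset.mul_sum]
    exact Finset.sum_congr rfl fun i _ => by ring
  set q : K := v' ⬝ᵥ (y *ᵥ v) with hq
  have hwv : w ⬝ᵥ v = q := by rw [hw, hq, dotProduct_mulVec]
  have hqρ : ρ q = ε * q := by
    suffices e : ρ (w ⬝ᵥ v) = ε * (v' ⬝ᵥ (y *ᵥ v)) by rwa [hwv] at e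
    simp only [dotProduct, map_sum, map_mul, hwρ, hv', Finset.mul_sum]
    exact Finset.sum_congr rfl fun i _ => by ring
  set c : K := (a - 1) / q with hc
  have hcρ : ρ c = (ρ a - 1) / (ε * q) := by rw [hc]; simp [hqρ]
  refine ⟨1 + vecMulVec (c • v) w, ?_, ?_⟩
  · have hstar : ((1 + vecMulVec (c • v) w).map ⇑ρ)ᵀ
        = 1 + vecMulVec ((ρ c * ε) • (y *ᵥ v)) v' := by
      ext i j
      simp only [transpose_apply, map_apply, Matrix.add_apply, vecMulVec_apply, map_add, map_mul,
        Pi.smul_apply, smul_eq_mul, hwρ, hv', Matrix.one_apply]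
      rw [apply_ite ρ, map_one, map_zero]
      simp only [eq_comm]
      ring
    rw [hstar, add_mul, one_mul, vecMulVec_mul, mul_add, mul_one, add_mul, mul_vecMulVec,
      vecMulVec_mul_vecMulVec, mulVec_smul]
    ext i j
    have key : c + ρ c * ε + ρ c * ε * c * q = 0 := by
      rw [hcρ, hc]
      field_simp
      linear_combination ha
    simp only [Matrix.add_apply, vecMulVec_apply, Pi.smul_apply, smul_eq_mul, ← hw, dotProduct_smul, hwv]
    linear_combination ((y *ᵥ v) i * w j) * key
  · rw [vecMulVec_eq Unit, det_one_add_replicateCol_mul_replicateRow]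
    rw [dotProduct_smul, hwv, hc]
    simp; field_simp; ring
end

section
/- For every x ∈ X^j there exists z ∈ GL_n(E') with x = z·σ(z)^{-1}, and for any such z the matrix y = transpose(τ(z))·j·z lies in Y_n(F). Moreover, the assignment sending the orbit G^j(E)·x to the orbit y ⋆ GL_n(F') is a well-defined bijection from the set of G^j(E)-orbits in X^j onto the set of GL_n(F')-orbits in (j ⋆ GL_n(E')) ∩ Y_n(F). -/
open Matrix

namespace GaloisPair

variable {E' : Type} [Field E']

/-- `g ∈ G^j(E)`: the isometry group of the `ε`-hermitian form `j`,
`G^j(E) = {g ∈ GL_n(E') : τ(g)ᵀ j g = j}` (`τ` applied entrywise). -/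
def Gj {n : ℕ} (τ : E' → E') (j g : Matrix (Fin n) (Fin n) E') : Prop :=
  IsUnit g ∧ (g.map τ)ᵀ * j * g = j

/-- `x ∈ X^j = {x ∈ G^j(E) : x·σ(x) = 1}`. -/
def Xj {n : ℕ} (σ τ : E' → E') (j x : Matrix (Fin n) (Fin n) E') : Prop :=
  Gj τ j x ∧ x * x.map σ = 1

/-- `x'` lies in the `G^j(E)`-orbit of `x` for twisted conjugation `g·x = g x σ(g)⁻¹`. -/
def orbGj {n : ℕ} (σ τ : E' → E') (j x x' : Matrix (Fin n) (Fin n) E') : Prop :=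
  ∃ g, Gj τ j g ∧ x' = g * x * (g.map σ)⁻¹

/-- `y ∈ Y_n(F)`: invertible, entries fixed by `σ` (i.e. in `F'`), and `τ(y)ᵀ = ε • y`. -/
def inYnF {n : ℕ} (σ τ : E' → E') (ε : E') (y : Matrix (Fin n) (Fin n) E') : Prop :=
  IsUnit y ∧ (∀ a b, σ (y a b) = y a b) ∧ (y.map τ)ᵀ = ε • y

/-- `y'` lies in the `GL_n(F')`-orbit of `y` for the action `y ⋆ g = τ(g)ᵀ y g`
(elements of `GL_n(F')` are the invertible matrices with `σ`-fixed entries). -/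
def orbY {n : ℕ} (σ τ : E' → E') (y y' : Matrix (Fin n) (Fin n) E') : Prop :=
  ∃ g, (IsUnit g ∧ ∀ a b, σ (g a b) = g a b) ∧ y' = (g.map τ)ᵀ * y * g

end GaloisPair

open GaloisPair

open Matrix

namespace GaloisPairAux

variable {E' : Type} [Field E'] {n : ℕ}

theorem eq_mul_inv_iff {x z w : Matrix (Fin n) (Fin n) E'} (hw : IsUnit w) :
    x = z * w⁻¹ ↔ x * w = z := by
  have hd := (Matrix.isUnit_iff_isUnit_det _).1 hw
  constructor
  · rintro rfl
    rw [Matrix.mul_assoc, Matrix.nonsing_inv_mul _ hd, Matrix.mul_one]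
  · rintro rfl
    rw [Matrix.mul_assoc, Matrix.mul_nonsing_inv _ hd, Matrix.mul_one]

theorem map_unit (f : E' →+* E') {z : Matrix (Fin n) (Fin n) E'} (hz : IsUnit z) :
    IsUnit (z.map f) := hz.map f.mapMatrix

theorem tr_unit {z : Matrix (Fin n) (Fin n) E'} (hz : IsUnit z) : IsUnit zᵀ := by
  rw [Matrix.isUnit_iff_isUnit_det] at *
  rwa [Matrix.det_transpose]

theorem hilbert90 (K : Type) [Field K] [Infinite K] [Algebra K E'] [CharZero E']
    (σ : E' ≃ₐ[K] E') (hσ2 : ∀ a, σ (σ a) = a) (hσ1 : σ ≠ 1)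
    (x : Matrix (Fin n) (Fin n) E') (hx : x * x.map σ = 1) :
    ∃ z, IsUnit z ∧ x * z.map σ = z := by
  obtain ⟨e, he⟩ : ∃ e, σ e ≠ e := by
    by_contra! h
    exact hσ1 (AlgEquiv.ext h)
  obtain ⟨d, hd, hd0⟩ : ∃ d, σ d = -d ∧ d ≠ 0 :=
    ⟨σ e - e, by rw [map_sub, hσ2]; ring, sub_ne_zero.2 he⟩
  let A : Matrix (Fin n) (Fin n) (Polynomial E') :=
    (Polynomial.X + Polynomial.C d) • 1 + (Polynomial.X - Polynomial.C d) • x.map Polynomial.C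
  have hA : ∀ a : E', A.det.eval a = ((a + d) • (1 : Matrix (Fin n) (Fin n) E') + (a - d) • x).det := by
    intro a
    rw [← Polynomial.coe_evalRingHom, RingHom.map_det]
    congr 1
    ext i k
    by_cases hik : i = k <;> simp [A, Matrix.one_apply, hik]
  have hP : A.det ≠ 0 := by
    intro h
    have := hA d
    rw [h] at this
    simp only [Polynomial.eval_zero, sub_self, zero_smul, add_zero, Matrix.det_smul, Matrix.det_one,
      mul_one] at this
    refine pow_ne_zero _ ?_ this.symm
    intro h2
    exact hd0 (by rw [← two_mul] at h2; simpa using h2)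
  obtain ⟨a, ha⟩ : ∃ a : K, A.det.eval (algebraMap K E' a) ≠ 0 := by
    by_contra! h
    exact hP (Polynomial.eq_zero_of_infinite_isRoot _
      ((Set.infinite_range_of_injective (algebraMap K E').injective).mono
        (by rintro _ ⟨a, rfl⟩; exact h a)))
  rw [hA] at ha
  refine ⟨_, (Matrix.isUnit_iff_isUnit_det _).2 (isUnit_iff_ne_zero.2 ha), ?_⟩
  set b := algebraMap K E' a
  have hb : σ b = b := σ.commutes a
  have : ((b + d) • (1 : Matrix (Fin n) (Fin n) E') + (b - d) • x).map σ
      = (b - d) • (1 : Matrix (Fin n) (Fin n) E') + (b + d) • x.map σ := by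
    ext i k
    by_cases hik : i = k <;> simp [Matrix.one_apply, hik, hb, hd] <;> ring
  rw [this, Matrix.mul_add, Matrix.mul_smul, Matrix.mul_smul, hx, Matrix.mul_one, add_comm]

end GaloisPairAux

open GaloisPair GaloisPairAux

theorem stmt_3 (p : ℕ) [Fact p.Prime]
    (E' : Type) [Field E'] [Algebra ℚ_[p] E'] [FiniteDimensional ℚ_[p] E']
    (σ τ : E' ≃ₐ[ℚ_[p]] E')
    (hσ2 : σ * σ = 1) (hτ2 : τ * τ = 1) (hcomm : σ * τ = τ * σ)
    (hσ1 : σ ≠ 1)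
    (hcase : (τ ≠ 1 ∧ σ ≠ τ) ∨ τ = 1)
    (ε : E') (hε : ε = 1 ∨ ε = -1)
    (n : ℕ) (hn : 1 ≤ n)
    (hsymp : τ = 1 → ε = -1 → Even n)
    (j : Matrix (Fin n) (Fin n) E')
    (hj : inYnF ⇑σ ⇑τ ε j) :
    -- every x ∈ X^j is of the form z·σ(z)⁻¹
    (∀ x, Xj ⇑σ ⇑τ j x → ∃ z, IsUnit z ∧ x = z * (z.map ⇑σ)⁻¹) ∧
    -- for any such z, the matrix y = τ(z)ᵀ j z lies in Y_n(F)
    (∀ x z, Xj ⇑σ ⇑τ j x → IsUnit z → x = z * (z.map ⇑σ)⁻¹ →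
      inYnF ⇑σ ⇑τ ε ((z.map ⇑τ)ᵀ * j * z)) ∧
    -- the assignment is well defined and injective on orbits
    (∀ x x' z z', Xj ⇑σ ⇑τ j x → Xj ⇑σ ⇑τ j x' → IsUnit z → IsUnit z' →
      x = z * (z.map ⇑σ)⁻¹ → x' = z' * (z'.map ⇑σ)⁻¹ →
      (orbGj ⇑σ ⇑τ j x x' ↔ orbY ⇑σ ⇑τ ((z.map ⇑τ)ᵀ * j * z) ((z'.map ⇑τ)ᵀ * j * z'))) ∧
    -- the assignment is surjective onto (j ⋆ GL_n(E')) ∩ Y_n(F)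
    (∀ y, (∃ g, IsUnit g ∧ y = (g.map ⇑τ)ᵀ * j * g) → inYnF ⇑σ ⇑τ ε y →
      ∃ z, IsUnit z ∧ y = (z.map ⇑τ)ᵀ * j * z ∧ Xj ⇑σ ⇑τ j (z * (z.map ⇑σ)⁻¹)) := by
  have s2 : ∀ a, σ (σ a) = a := fun a => DFunLike.congr_fun hσ2 a
  have t2 : ∀ a, τ (τ a) = a := fun a => DFunLike.congr_fun hτ2 a
  have st : ∀ a, σ (τ a) = τ (σ a) := fun a => DFunLike.congr_fun hcomm a
  haveI : CharZero E' := charZero_of_injective_algebraMap (algebraMap ℚ_[p] E').injective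
  obtain ⟨hju, hjs, hjt⟩ := hj
  have hjS : j.map σ = j := by ext a b; exact hjs a b
  have Smul : ∀ A B : Matrix (Fin n) (Fin n) E', (A * B).map σ = A.map σ * B.map σ :=
    fun A B => Matrix.map_mul (f := (σ : E' →+* E'))
  have Tmul : ∀ A B : Matrix (Fin n) (Fin n) E', ((A * B).map τ)ᵀ = (B.map τ)ᵀ * (A.map τ)ᵀ :=
    fun A B => by
      rw [← Matrix.transpose_mul]; congr 1; exact Matrix.map_mul (f := (τ : E' →+* E'))
  have SS : ∀ A : Matrix (Fin n) (Fin n) E', (A.map σ).map σ = A := fun A => by ext; simp [s2]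
  have TT : ∀ A : Matrix (Fin n) (Fin n) E', (((A.map τ)ᵀ).map τ)ᵀ = A := fun A => by ext; simp [t2]
  have ST : ∀ A : Matrix (Fin n) (Fin n) E', ((A.map τ)ᵀ).map σ = ((A.map σ).map τ)ᵀ :=
    fun A => by ext; simp [st]
  have Su : ∀ {A : Matrix (Fin n) (Fin n) E'}, IsUnit A → IsUnit (A.map σ) :=
    fun h => map_unit (σ : E' →+* E') h
  have Tu : ∀ {A : Matrix (Fin n) (Fin n) E'}, IsUnit A → IsUnit ((A.map τ)ᵀ) :=
    fun h => tr_unit (map_unit (τ : E' →+* E') h)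
  refine ⟨?_, ?_, ?_, ?_⟩
  · rintro x ⟨-, hx⟩
    obtain ⟨z, hz, h⟩ := hilbert90 ℚ_[p] σ s2 hσ1 x hx
    exact ⟨z, hz, (eq_mul_inv_iff (Su hz)).2 h⟩
  · rintro x z ⟨⟨-, hxj⟩, -⟩ hz h
    rw [eq_mul_inv_iff (Su hz)] at h
    refine ⟨((Tu hz).mul hju).mul hz, ?_, ?_⟩
    · have : ((z.map τ)ᵀ * j * z).map σ = (z.map τ)ᵀ * j * z := by
        rw [Smul, Smul, hjS, ST]
        conv_rhs => rw [← h, Tmul]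
        conv_lhs => rw [← hxj]
        simp only [Matrix.mul_assoc]
      intro a b
      exact congrFun (congrFun this a) b
    · rw [Tmul, Tmul, TT, hjt, Matrix.smul_mul, Matrix.mul_smul, Matrix.mul_assoc]
  · intro x x' z z' hx hx' hz hz' h h'
    rw [eq_mul_inv_iff (Su hz)] at h
    rw [eq_mul_inv_iff (Su hz')] at h'
    constructor
    · rintro ⟨g, ⟨hg, hgj⟩, hgx⟩
      rw [eq_mul_inv_iff (Su hg)] at hgx
      have hgz : IsUnit (g * z) := hg.mul hz
      obtain ⟨u, hu⟩ := hgz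
      obtain ⟨k, hk⟩ : ∃ k, z' = g * z * k := ⟨(u⁻¹).val * z', by
        rw [← hu]; exact (u.mul_inv_cancel_left z').symm⟩
      have hku : IsUnit k := by
        rw [hk] at hz'
        rw [← hu] at hz'
        simpa using hz'
      have hkS : k.map σ = k := by
        have h1 : x' * (g * z * k).map σ = g * z * k := hk ▸ h'
        have h2 : x' * (g * z * k).map σ = g * z * k.map σ := by
          rw [Smul, Smul, ← Matrix.mul_assoc, ← Matrix.mul_assoc, hgx, Matrix.mul_assoc g, h]
        rw [h2, ← hu] at h1
        exact u.isUnit.mul_left_cancel h1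
      refine ⟨k, ⟨hku, fun a b => congrFun (congrFun hkS a) b⟩, ?_⟩
      rw [hk, Tmul, Tmul]
      conv_rhs => rw [← hgj]
      simp only [Matrix.mul_assoc]
    · rintro ⟨k, ⟨hk, hkS'⟩, hky⟩
      have hkS : k.map σ = k := by ext a b; exact hkS' a b
      have hzk : IsUnit (z * k) := hz.mul hk
      obtain ⟨u, hu⟩ := hzk
      obtain ⟨g, hg⟩ : ∃ g, z' = g * (z * k) := ⟨z' * (u⁻¹).val, by
        rw [← hu]; exact (u.inv_mul_cancel_right z').symm⟩
      have hgu : IsUnit g := by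
        rw [hg, ← hu] at hz'
        simpa using hz'
      refine ⟨g, ⟨hgu, ?_⟩, ?_⟩
      · have hzk : IsUnit (z * k) := hz.mul hk
        apply (Tu hzk).mul_left_cancel
        apply hzk.mul_right_cancel
        rw [hg, Tmul] at hky
        rw [Tmul] at *
        simp only [Matrix.mul_assoc] at *
        exact hky
      · rw [eq_mul_inv_iff (Su hgu)]
        have hzk : IsUnit (z * k) := hz.mul hk
        apply (Su hzk).mul_right_cancel
        rw [Matrix.mul_assoc, ← Smul, ← hg, h', Smul, hkS, Matrix.mul_assoc g, ← Matrix.mul_assoc x,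
          h, ← hg]
  · rintro y ⟨z, hz, hy⟩ ⟨-, hyS', -⟩
    refine ⟨z, hz, hy, ?_⟩
    have hyS : y.map σ = y := by ext a b; exact hyS' a b
    obtain ⟨x, hx⟩ : ∃ x, x = z * (z.map σ)⁻¹ := ⟨_, rfl⟩
    rw [← hx]
    have hxu : IsUnit x := by
      rw [hx]
      exact hz.mul ((Matrix.isUnit_nonsing_inv_iff).2 (Su hz))
    rw [eq_mul_inv_iff (Su hz)] at hx
    refine ⟨⟨hxu, ?_⟩, ?_⟩
    · apply (Tu (Su hz)).mul_left_cancel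
      apply (Su hz).mul_right_cancel
      have h1 : ((z.map σ).map τ)ᵀ * j * z.map σ = (z.map τ)ᵀ * j * z := by
        rw [← hy, ← hyS, hy, Smul, Smul, hjS, ST]
      rw [h1]
      conv_rhs => rw [← hx, Tmul]
      simp only [Matrix.mul_assoc]
    · apply hz.mul_right_cancel
      have := congrArg (fun A => A.map σ) hx
      simp only [Smul, SS] at this
      rw [Matrix.mul_assoc, this, hx, Matrix.one_mul]
end

section
/- Set SG^j(E) = G^j(E) ∩ SL_n(E'). For every x ∈ X^j one has SG^j(E)·x = {x' ∈ G^j(E)·x : det x' = det x}. In particular, in the orthogonal case (F' = F, τ = id, ε = 1) one has SG^j(E)·x = G^j(E)·x. -/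
open Matrix

namespace GaloisPair

variable {E' : Type} [Field E']

/-- `x'` lies in the `SG^j(E) = G^j(E) ∩ SL_n(E')`-orbit of `x`. -/
def orbSGj {n : ℕ} (σ τ : E' → E') (j x x' : Matrix (Fin n) (Fin n) E') : Prop :=
  ∃ g, Gj τ j g ∧ g.det = 1 ∧ x' = g * x * (g.map σ)⁻¹

theorem refl_form {K : Type} [Field K] {n : ℕ} (f : K →+* K) (hf : ∀ a, f (f a) = a)
    (ε : K) (j : Matrix (Fin n) (Fin n) K) (hj : (j.map f)ᵀ = ε • j) (a : K) (v : Fin n → K)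
    (h0 : ε * f a + a + ε * f a * a * ((f ∘ v) ᵥ* j ⬝ᵥ v) = 0) :
    (((1 + a • vecMulVec v ((f ∘ v) ᵥ* j) : Matrix (Fin n) (Fin n) K).map f)ᵀ) * j *
      (1 + a • vecMulVec v ((f ∘ v) ᵥ* j)) = j := by
  have hv : f ∘ (f ∘ v) = v := by ext i; simp [hf]
  have h1 : f ∘ ((f ∘ v) ᵥ* j) = ε • (j *ᵥ v) := by
    have : f ∘ ((f ∘ v) ᵥ* j) = v ᵥ* (j.map f) := by
      ext i
      have := RingHom.map_vecMul f j (f ∘ v) i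
      rw [hv] at this
      exact this
    rw [this, ← mulVec_transpose, hj, smul_mulVec]
  have h2 : (((1 + a • vecMulVec v ((f ∘ v) ᵥ* j) : Matrix (Fin n) (Fin n) K).map f)ᵀ)
      = 1 + (ε * f a) • vecMulVec (j *ᵥ v) (f ∘ v) := by
    have h3 : (vecMulVec v ((f ∘ v) ᵥ* j)).map f = vecMulVec (f ∘ v) (ε • (j *ᵥ v)) := by
      rw [← h1]; ext i k; simp [vecMulVec_apply]
    have h4 : ((1 + a • vecMulVec v ((f ∘ v) ᵥ* j) : Matrix (Fin n) (Fin n) K).map f)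
        = 1 + f a • vecMulVec (f ∘ v) (ε • (j *ᵥ v)) := by
      rw [← h3]; ext i k
      by_cases hik : i = k <;> simp [hik]
    rw [h4, transpose_add, transpose_smul, transpose_vecMulVec, transpose_one, smul_vecMulVec,
      smul_smul, mul_comm ε]
  rw [h2, add_mul, one_mul, smul_mul_assoc, vecMulVec_mul, mul_add, mul_one, add_mul,
    smul_mul_assoc, mul_smul_comm, mul_smul_comm, mul_vecMulVec, vecMulVec_mul_vecMulVec,
    vecMulVec_smul, add_assoc]
  have : (ε * f a) • vecMulVec (j *ᵥ v) ((f ∘ v) ᵥ* j) +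
      (a • vecMulVec (j *ᵥ v) ((f ∘ v) ᵥ* j) + (ε * f a) • a • ((f ∘ v) ᵥ* j ⬝ᵥ v) •
        vecMulVec (j *ᵥ v) ((f ∘ v) ᵥ* j)) =
      (ε * f a + a + ε * f a * a * ((f ∘ v) ᵥ* j ⬝ᵥ v)) • vecMulVec (j *ᵥ v) ((f ∘ v) ᵥ* j) := by
    module
  rw [h0, zero_smul] at this
  rw [this, add_zero]

theorem refl_det {K : Type} [Field K] {n : ℕ} (a : K) (v w : Fin n → K) :
    (1 + a • vecMulVec v w).det = 1 + a * (w ⬝ᵥ v) := by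
  rw [← smul_vecMulVec, vecMulVec_eq Unit, det_one_add_replicateCol_mul_replicateRow,
    dotProduct_smul, smul_eq_mul]

theorem sympl_det {K : Type} [Field K] (h2 : (2 : K) ≠ 0) {n : ℕ} (j : Matrix (Fin n) (Fin n) K)
    (hjU : IsUnit j) (hj : jᵀ = -j) (g : Matrix (Fin n) (Fin n) K) (hg : gᵀ * j * g = j) :
    g.det = 1 := by
  induction hd : Module.finrank K (LinearMap.ker (g + 1).mulVecLin) using Nat.strong_induction_on
    generalizing g with
  | _ d ih =>
  have hjd : j.det ≠ 0 := ((Matrix.isUnit_iff_isUnit_det j).1 hjU).ne_zero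
  by_cases hK : LinearMap.ker (g + 1).mulVecLin = ⊥
  · have hdet : (g + 1).det ≠ 0 := by
      intro h0
      obtain ⟨v, hv, hv'⟩ := Matrix.exists_mulVec_eq_zero_iff.2 h0
      have : v ∈ LinearMap.ker (g + 1).mulVecLin := LinearMap.mem_ker.2 hv'
      rw [hK] at this
      exact hv (by simpa using this)
    have e : (g + 1)ᵀ * j * g = j * (g + 1) := by
      simp only [transpose_add, transpose_one, add_mul, one_mul, mul_add, mul_one, hg]
      rw [add_comm]
    have := congrArg det e
    simp only [det_mul, det_transpose] at this
    have h3 : ((g + 1).det * j.det) * g.det = ((g + 1).det * j.det) * 1 := by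
      rw [this]; ring
    exact mul_left_cancel₀ (mul_ne_zero hdet hjd) h3
  · obtain ⟨w, hw, hw0⟩ := Submodule.exists_mem_ne_zero_of_ne_bot hK
    have hw' : g *ᵥ w = - w := by
      have : (g + 1) *ᵥ w = 0 := LinearMap.mem_ker.1 hw
      rw [add_mulVec, one_mulVec] at this
      exact eq_neg_of_add_eq_zero_left this
    have hjw : j *ᵥ w ≠ 0 := by
      intro h0
      exact hjd (Matrix.exists_mulVec_eq_zero_iff.1 ⟨w, hw0, h0⟩)
    obtain ⟨v, hv⟩ : ∃ v, v ⬝ᵥ (j *ᵥ w) ≠ 0 := by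
      by_contra! hcon
      exact hjw (dotProduct_eq_zero _ (fun v => by rw [dotProduct_comm]; exact hcon v))
    have halt : v ᵥ* j ⬝ᵥ v = 0 := by
      have : v ᵥ* j ⬝ᵥ v = - (v ᵥ* j ⬝ᵥ v) := by
        conv_lhs => rw [← dotProduct_mulVec, ← vecMul_transpose, hj, vecMul_neg, dotProduct_neg,
          dotProduct_comm]
      have h4 : 2 * (v ᵥ* j ⬝ᵥ v) = 0 := by linear_combination this
      exact (mul_eq_zero.1 h4).resolve_left h2
    set t : Matrix (Fin n) (Fin n) K := 1 + (1 : K) • vecMulVec v (v ᵥ* j) with ht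
    have htj : tᵀ * j * t = j := by
      have := refl_form (RingHom.id K) (fun _ => rfl) (-1) j (by simpa using hj) 1 v (by simp [halt])
      simpa [ht] using this
    have htd : t.det = 1 := by rw [ht, refl_det, halt]; simp
    have key : ∀ u, (g + 1) *ᵥ u ⬝ᵥ (j *ᵥ w) = 0 := by
      intro u
      have e1 : (g *ᵥ u) ⬝ᵥ (j *ᵥ (g *ᵥ w)) = u ⬝ᵥ (j *ᵥ w) := by
        conv_rhs => rw [← hg]
        rw [← vecMul_transpose, ← dotProduct_mulVec]
        simp only [mulVec_mulVec, Matrix.mul_assoc]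
      rw [hw', mulVec_neg, dotProduct_neg] at e1
      rw [add_mulVec, one_mulVec, add_dotProduct, ← e1]; ring
    have hmv : ∀ u, (t * g + 1) *ᵥ u = (g + 1) *ᵥ u + (v ᵥ* j ⬝ᵥ (g *ᵥ u)) • v := by
      intro u
      simp only [ht, add_mulVec, one_mulVec, ← mulVec_mulVec, one_smul, vecMulVec_mulVec]
      simp only [op_smul_eq_smul]; abel
    have hlt : LinearMap.ker (t * g + 1).mulVecLin < LinearMap.ker (g + 1).mulVecLin := by
      refine lt_of_le_of_ne ?_ ?_
      · intro u hu
        have hu' : (t * g + 1) *ᵥ u = 0 := LinearMap.mem_ker.1 hu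
        rw [hmv] at hu'
        have h5 := congrArg (· ⬝ᵥ (j *ᵥ w)) hu'
        simp only [add_dotProduct, key, smul_dotProduct, zero_dotProduct, zero_add, smul_eq_mul] at h5
        have h6 := (mul_eq_zero.1 h5).resolve_right hv
        rw [h6, zero_smul, add_zero] at hu'
        exact LinearMap.mem_ker.2 hu'
      · intro heq
        rw [← heq] at hw
        have hu' : (t * g + 1) *ᵥ w = 0 := LinearMap.mem_ker.1 hw
        rw [hmv] at hu'
        have h5 := congrArg (· ⬝ᵥ (j *ᵥ w)) hu'
        simp only [add_dotProduct, key, smul_dotProduct, zero_dotProduct, zero_add, smul_eq_mul] at h5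
        have h6 := (mul_eq_zero.1 h5).resolve_right hv
        rw [hw', dotProduct_neg, ← dotProduct_mulVec] at h6
        exact hv (neg_eq_zero.1 h6)
    have := ih _ (by rw [← hd]; exact Submodule.finrank_lt_finrank_of_lt hlt) (t * g)
      (by rw [transpose_mul]
          calc gᵀ * tᵀ * j * (t * g) = gᵀ * (tᵀ * j * t) * g := by simp only [Matrix.mul_assoc]
            _ = j := by rw [htj, hg]) rfl
    rwa [det_mul, htd, one_mul] at this

theorem map_smap {K : Type} [Field K] {n : ℕ} (s : K →+* K) (x : Matrix (Fin n) (Fin n) K)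
    (v : Fin n → K) : s ∘ (x *ᵥ v) = x.map s *ᵥ (s ∘ v) := by
  ext i; exact RingHom.map_mulVec s x v i

theorem form_inv {K : Type} [Field K] {n : ℕ} (f : K →+* K) (j x : Matrix (Fin n) (Fin n) K)
    (hx : (x.map f)ᵀ * j * x = j) (v : Fin n → K) :
    (f ∘ (x *ᵥ v)) ᵥ* j ᵥ* x = (f ∘ v) ᵥ* j := by
  rw [map_smap, ← vecMul_transpose, vecMul_vecMul, vecMul_vecMul, ← Matrix.mul_assoc, hx]

theorem exists_v {K : Type} [Field K] {n : ℕ} (hn : 1 ≤ n) (h2 : (2 : K) ≠ 0) (s f : K →+* K)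
    (hs : ∀ a, s (s a) = a) (b : K) (hb : s b ≠ b)
    (j : Matrix (Fin n) (Fin n) K) (hjd : j.det ≠ 0)
    (hcase : (∃ a, s a = a ∧ f a ≠ a) ∨ ((∀ a, f a = a) ∧ jᵀ = j))
    (x : Matrix (Fin n) (Fin n) K) (hx : x * x.map s = 1) :
    ∃ v, x *ᵥ (s ∘ v) = v ∧ (f ∘ v) ᵥ* j ⬝ᵥ v ≠ 0 := by
  by_contra! hcon
  have hadd : ∀ (r : K →+* K) (v w : Fin n → K), r ∘ (v + w) = r ∘ v + r ∘ w := by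
    intro r v w; ext i; simp
  have hsm : ∀ (r : K →+* K) (a : K) (v : Fin n → K), r ∘ (a • v) = r a • (r ∘ v) := by
    intro r a v; ext i; simp
  have hss : ∀ v : Fin n → K, s ∘ (s ∘ v) = v := by intro v; ext i; simp [hs]
  have htt : ∀ v : Fin n → K, x *ᵥ (s ∘ (x *ᵥ (s ∘ v))) = v := by
    intro v; rw [map_smap, hss, mulVec_mulVec, hx, one_mulVec]
  have hpol : ∀ v w, x *ᵥ (s ∘ v) = v → x *ᵥ (s ∘ w) = w →
      (f ∘ v) ᵥ* j ⬝ᵥ w + (f ∘ w) ᵥ* j ⬝ᵥ v = 0 := by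
    intro v w hv hw
    have h := hcon (v + w) (by rw [hadd, mulVec_add, hv, hw])
    rw [hadd, add_vecMul, add_dotProduct, dotProduct_add, dotProduct_add, hcon v hv, hcon w hw] at h
    linear_combination h
  have hz : ∀ v w, x *ᵥ (s ∘ v) = v → x *ᵥ (s ∘ w) = w → (f ∘ v) ᵥ* j ⬝ᵥ w = 0 := by
    intro v w hv hw
    have h1 := hpol v w hv hw
    rcases hcase with ⟨a, ha, hfa⟩ | ⟨hf, hjs⟩
    · have h3 := hpol v (a • w) hv (by rw [hsm, mulVec_smul, hw, ha])
      rw [hsm, smul_vecMul, smul_dotProduct, dotProduct_smul, smul_eq_mul, smul_eq_mul] at h3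
      have : (f a - a) * ((f ∘ v) ᵥ* j ⬝ᵥ w) = 0 := by linear_combination f a * h1 - h3
      exact (mul_eq_zero.1 this).resolve_left (sub_ne_zero.2 hfa)
    · have hfv : ∀ v : Fin n → K, f ∘ v = v := by intro v; ext i; simp [hf]
      rw [hfv, hfv] at h1
      rw [hfv]
      have h3 : w ᵥ* j ⬝ᵥ v = v ᵥ* j ⬝ᵥ w := by
        conv_lhs => rw [← dotProduct_mulVec, ← vecMul_transpose, hjs, dotProduct_comm]
      rw [h3] at h1
      have : 2 * (v ᵥ* j ⬝ᵥ w) = 0 := by linear_combination h1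
      exact (mul_eq_zero.1 this).resolve_left h2
  have hspan : ∀ w : Fin n → K, ∃ a₁ a₂ : K, ∃ w₁ w₂, x *ᵥ (s ∘ w₁) = w₁ ∧ x *ᵥ (s ∘ w₂) = w₂ ∧
      w = a₁ • w₁ + a₂ • w₂ := by
    intro w
    have hb' : b - s b ≠ 0 := sub_ne_zero.2 (Ne.symm hb)
    refine ⟨-((b - s b)⁻¹ * s b), (b - s b)⁻¹, w + x *ᵥ (s ∘ w), b • w + s b • (x *ᵥ (s ∘ w)),
      ?_, ?_, ?_⟩
    · rw [hadd, mulVec_add, htt, add_comm]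
    · rw [hadd, mulVec_add, hsm, hsm, mulVec_smul, mulVec_smul, htt, hs, add_comm]
    · have : w = ((b - s b)⁻¹ * (b - s b)) • w := by rw [inv_mul_cancel₀ hb', one_smul]
      nth_rewrite 1 [this]
      module
  have hzz : ∀ v w, (f ∘ v) ᵥ* j ⬝ᵥ w = 0 := by
    intro v w
    obtain ⟨a₁, a₂, w₁, w₂, hw₁, hw₂, rfl⟩ := hspan w
    obtain ⟨c₁, c₂, v₁, v₂, hv₁, hv₂, rfl⟩ := hspan v
    simp only [hadd, hsm, add_vecMul, smul_vecMul, add_dotProduct, dotProduct_add, smul_dotProduct,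
      dotProduct_smul, hz v₁ w₁ hv₁ hw₁, hz v₁ w₂ hv₁ hw₂, hz v₂ w₁ hv₂ hw₁, hz v₂ w₂ hv₂ hw₂]
    simp
  haveI : Nonempty (Fin n) := ⟨⟨0, hn⟩⟩
  apply hjd
  have hj0 : j = 0 := by
    ext i k
    have := hzz (Pi.single i 1) (Pi.single k 1)
    have e : f ∘ (Pi.single i (1 : K) : Fin n → K) = Pi.single i 1 := by
      ext l; by_cases h : l = i
      · subst h; simp
      · simp [h]
    rw [e] at this
    simpa using this
  rw [hj0, det_zero]

theorem stab {K : Type} [Field K] {n : ℕ} (hn : 1 ≤ n) (h2 : (2 : K) ≠ 0) (s f : K →+* K)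
    (hs : ∀ a, s (s a) = a) (hf : ∀ a, f (f a) = a) (hsf : ∀ a, s (f a) = f (s a))
    (b : K) (hb : s b ≠ b)
    (ε : K) (hε : ε ≠ 0)
    (j : Matrix (Fin n) (Fin n) K) (hjd : j.det ≠ 0) (hjs : j.map s = j)
    (hj : (j.map f)ᵀ = ε • j)
    (hcase : (∃ a, s a = a ∧ f a ≠ a) ∨ ((∀ a, f a = a) ∧ jᵀ = j))
    (x : Matrix (Fin n) (Fin n) K) (hxj : (x.map f)ᵀ * j * x = j) (hx : x * x.map s = 1)
    (c : K) (hsc : s c = c) (hc : f c * c = 1) :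
    ∃ h : Matrix (Fin n) (Fin n) K, (h.map f)ᵀ * j * h = j ∧ h.det = c ∧ h * x = x * h.map s := by
  obtain ⟨v, hv, hq⟩ := exists_v hn h2 s f hs b hb j hjd hcase x hx
  set q := (f ∘ v) ᵥ* j ⬝ᵥ v with hqdef
  have hrow : s ∘ ((f ∘ v) ᵥ* j) = (f ∘ (s ∘ v)) ᵥ* j := by
    have : s ∘ ((f ∘ v) ᵥ* j) = (s ∘ (f ∘ v)) ᵥ* (j.map s) := by
      ext i; exact RingHom.map_vecMul s j (f ∘ v) i
    rw [this, hjs]; congr 1; ext i; simp [hsf]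
  have hrow2 : (f ∘ v) ᵥ* j ᵥ* x = (f ∘ (s ∘ v)) ᵥ* j := by
    conv_lhs => rw [← hv]
    exact form_inv f j x hxj _
  have hsq : s q = q := by
    have : s q = (s ∘ ((f ∘ v) ᵥ* j)) ⬝ᵥ (s ∘ v) := RingHom.map_dotProduct s _ _
    rw [this, hrow, ← hrow2, ← dotProduct_mulVec, hv]
  have hfq : f q = ε * q := by
    have : f q = (f ∘ ((f ∘ v) ᵥ* j)) ⬝ᵥ (f ∘ v) := RingHom.map_dotProduct f _ _
    have h1 : f ∘ ((f ∘ v) ᵥ* j) = (f ∘ (f ∘ v)) ᵥ* (j.map f) := by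
      ext i; exact RingHom.map_vecMul f j (f ∘ v) i
    have h3 : f ∘ (f ∘ v) = v := by ext i; simp [hf]
    rw [this, h1, h3, ← mulVec_transpose, hj, smul_mulVec, smul_dotProduct, smul_eq_mul,
      dotProduct_comm, dotProduct_mulVec]
  set a := (c - 1) / q with ha
  have hsa : s a = a := by simp [ha, hsc, hsq]
  have hfa : ε * f a = (f c - 1) / q := by
    rw [ha, map_div₀, hfq, map_sub, map_one]; field_simp
  refine ⟨1 + a • vecMulVec v ((f ∘ v) ᵥ* j), ?_, ?_, ?_⟩
  · apply refl_form f hf ε j hj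
    rw [hfa, ← hqdef, ha]
    field_simp
    linear_combination hc
  · rw [refl_det, ← hqdef, ha]; field_simp; ring
  · have h4 : (1 + a • vecMulVec v ((f ∘ v) ᵥ* j)).map s =
        1 + a • vecMulVec (s ∘ v) ((f ∘ (s ∘ v)) ᵥ* j) := by
      rw [← hrow]
      ext i k
      by_cases hik : i = k <;> simp [hik, hsa, vecMulVec_apply]
    rw [h4, add_mul, mul_add, one_mul, mul_one, smul_mul_assoc, mul_smul_comm, vecMulVec_mul,
      mul_vecMulVec, hv, hrow2]

end GaloisPair

open GaloisPair

/-- Set `SG^j(E) = G^j(E) ∩ SL_n(E')`.  For every `x ∈ X^j` one has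
`SG^j(E)·x = {x' ∈ G^j(E)·x : det x' = det x}`.  In particular, in the orthogonal case
(`τ = id`, `ε = 1`) one has `SG^j(E)·x = G^j(E)·x`. -/
theorem stmt_4 (p : ℕ) [Fact p.Prime]
    (E' : Type) [Field E'] [Algebra ℚ_[p] E'] [FiniteDimensional ℚ_[p] E']
    (σ τ : E' ≃ₐ[ℚ_[p]] E')
    (hσ2 : σ * σ = 1) (hτ2 : τ * τ = 1) (hcomm : σ * τ = τ * σ)
    (hσ1 : σ ≠ 1)
    (hcase : (τ ≠ 1 ∧ σ ≠ τ) ∨ τ = 1)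
    (ε : E') (hε : ε = 1 ∨ ε = -1)
    (n : ℕ) (hn : 1 ≤ n)
    (hsymp : τ = 1 → ε = -1 → Even n)
    (j : Matrix (Fin n) (Fin n) E')
    (hjU : IsUnit j) (hjF : ∀ a b, σ (j a b) = j a b) (hjh : (j.map ⇑τ)ᵀ = ε • j) :
    (∀ x, Xj ⇑σ ⇑τ j x → ∀ x',
      (orbSGj ⇑σ ⇑τ j x x' ↔ (orbGj ⇑σ ⇑τ j x x' ∧ x'.det = x.det))) ∧
    (τ = 1 → ε = 1 → ∀ x, Xj ⇑σ ⇑τ j x → ∀ x',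
      (orbSGj ⇑σ ⇑τ j x x' ↔ orbGj ⇑σ ⇑τ j x x')) := by
  haveI : CharZero E' := charZero_of_injective_algebraMap (algebraMap ℚ_[p] E').injective
  have h2 : (2 : E') ≠ 0 := two_ne_zero
  have hs : ∀ a, σ (σ a) = a := fun a => by rw [← AlgEquiv.mul_apply, hσ2]; rfl
  have ht : ∀ a, τ (τ a) = a := fun a => by rw [← AlgEquiv.mul_apply, hτ2]; rfl
  have hst : ∀ a, σ (τ a) = τ (σ a) := fun a => by
    rw [← AlgEquiv.mul_apply, hcomm]; rfl
  have hjd : j.det ≠ 0 := ((Matrix.isUnit_iff_isUnit_det j).1 hjU).ne_zero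
  have hjs : j.map σ = j := by ext a b; exact hjF a b
  have hε0 : ε ≠ 0 := by rcases hε with h | h <;> simp [h]
  obtain ⟨b, hb⟩ : ∃ b, σ b ≠ b := by
    by_contra! h
    exact hσ1 (AlgEquiv.ext h)
  have hmd : ∀ (r : E' ≃ₐ[ℚ_[p]] E') (g : Matrix (Fin n) (Fin n) E'), (g.map r).det = r g.det := by
    intro r g
    exact (RingHom.map_det (r : E' →+* E') g).symm
  have hdet : ∀ g, Gj τ j g → τ g.det * g.det = 1 := by
    intro g hg
    have := congrArg det hg.2
    rw [det_mul, det_mul, det_transpose, hmd] at this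
    have h3 : j.det * (τ g.det * g.det) = j.det * 1 := by linear_combination this
    exact mul_left_cancel₀ hjd h3
  have horb : ∀ x g : Matrix (Fin n) (Fin n) E',
      (g * x * (g.map σ)⁻¹).det = g.det * x.det * (σ g.det)⁻¹ := by
    intro x g
    rw [det_mul, det_mul, det_nonsing_inv, hmd, Ring.inverse_eq_inv']
  have hmul : ∀ (r : E' ≃ₐ[ℚ_[p]] E') (g h : Matrix (Fin n) (Fin n) E'),
      (g * h).map r = g.map r * h.map r := by
    intro r g h
    exact Matrix.map_mul (f := (r : E' →+* E'))
  have hmain : ∀ x, Xj ⇑σ ⇑τ j x → ∀ x',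
      (orbSGj ⇑σ ⇑τ j x x' ↔ (orbGj ⇑σ ⇑τ j x x' ∧ x'.det = x.det)) := by
    intro x hx x'
    constructor
    · rintro ⟨g, hg, hg1, rfl⟩
      refine ⟨⟨g, hg, rfl⟩, ?_⟩
      rw [horb, hg1]; simp
    · rintro ⟨⟨g, hg, rfl⟩, hd⟩
      by_cases hsy : τ = 1 ∧ ε = -1
      · refine ⟨g, hg, ?_, rfl⟩
        obtain ⟨rfl, rfl⟩ := hsy
        refine sympl_det h2 j hjU ?_ g ?_
        · have h3 : jᵀ = (-1 : E') • j := hjh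
          simpa using h3
        · exact hg.2
      have hgd : g.det ≠ 0 := ((Matrix.isUnit_iff_isUnit_det g).1 hg.1).ne_zero
      have hxd : x.det ≠ 0 := ((Matrix.isUnit_iff_isUnit_det x).1 hx.1.1).ne_zero
      have hsd : σ g.det = g.det := by
        have h0 : σ g.det ≠ 0 := by simpa using hgd
        rw [horb] at hd
        field_simp at hd
        first
        | exact hd.symm
        | exact (mul_right_cancel₀ hxd (by linear_combination hd)).symm
      have hcase' : (∃ a, σ a = a ∧ τ a ≠ a) ∨ ((∀ a, τ a = a) ∧ jᵀ = j) := by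
        rcases hcase with ⟨h1, h3⟩ | rfl
        · left
          by_contra! hcon
          have hb' : b - σ b ≠ 0 := sub_ne_zero.2 (Ne.symm hb)
          have hsum : τ (b + σ b) = b + σ b := hcon _ (by rw [map_add, hs, add_comm])
          have hprod : τ (b * σ b) = b * σ b := hcon _ (by rw [map_mul, hs, mul_comm])
          rw [map_add] at hsum
          rw [map_mul] at hprod
          have hroot : (τ b - b) * (τ b - σ b) = 0 := by
            linear_combination τ b * hsum - hprod
          have hexp : ∀ e, ∃ α β, σ α = α ∧ σ β = β ∧ e = α + β * b := by
            intro e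
            refine ⟨(b * σ e - σ b * e) / (b - σ b), (e - σ e) / (b - σ b), ?_, ?_, ?_⟩
            · rw [map_div₀, map_sub, map_sub, map_mul, map_mul, hs, hs, ← neg_div_neg_eq]
              congr 1 <;> ring
            · rw [map_div₀, map_sub, map_sub, hs, hs, ← neg_div_neg_eq]
              congr 1 <;> ring
            · field_simp; ring
          rcases mul_eq_zero.1 hroot with h | h
          · apply h1
            ext e
            obtain ⟨α, β, hα, hβ, rfl⟩ := hexp e
            rw [map_add, map_mul, hcon α hα, hcon β hβ, sub_eq_zero.1 h]; rfl
          · apply h3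
            ext e
            obtain ⟨α, β, hα, hβ, rfl⟩ := hexp e
            rw [map_add, map_mul, map_add, map_mul, hcon α hα, hcon β hβ, sub_eq_zero.1 h, hα, hβ]
        · right
          have he : ε = 1 := hε.resolve_right (fun h => hsy ⟨rfl, h⟩)
          have h3 : jᵀ = ε • j := hjh
          exact ⟨fun a => rfl, by rw [h3, he, one_smul]⟩
      obtain ⟨h, hh1, hh2, hh3⟩ := stab hn h2 (σ : E' →+* E') (τ : E' →+* E') hs ht hst b hb ε hε0 j
        hjd hjs hjh hcase' x hx.1.2 hx.2 (g.det)⁻¹ (by simp [hsd])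
        (by
          have := hdet g hg
          rw [map_inv₀, ← mul_inv]
          exact inv_eq_one.2 this)
      replace hh1 : (h.map τ)ᵀ * j * h = j := hh1
      replace hh3 : h * x = x * h.map σ := hh3
      have hhU : IsUnit h := by
        rw [Matrix.isUnit_iff_isUnit_det, hh2]; exact (inv_ne_zero hgd).isUnit
      have hhs : IsUnit (h.map σ).det := by
        rw [hmd, hh2]; exact isUnit_iff_ne_zero.2 (by simpa using hgd)
      refine ⟨g * h, ⟨hg.1.mul hhU, ?_⟩, ?_, ?_⟩
      · rw [hmul, transpose_mul]
        calc (h.map τ)ᵀ * (g.map τ)ᵀ * j * (g * h) = (h.map τ)ᵀ * ((g.map τ)ᵀ * j * g) * h := by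
              simp only [Matrix.mul_assoc]
          _ = j := by rw [hg.2, hh1]
      · rw [det_mul, hh2, mul_inv_cancel₀ hgd]
      · rw [hmul, Matrix.mul_inv_rev, Matrix.mul_assoc g h x, hh3]
        calc g * x * (g.map σ)⁻¹ = g * x * (h.map σ * (h.map σ)⁻¹) * (g.map σ)⁻¹ := by
              rw [Matrix.mul_nonsing_inv _ hhs, Matrix.mul_one]
          _ = _ := by simp only [Matrix.mul_assoc]
  refine ⟨hmain, ?_⟩
  rintro rfl rfl x hx x'
  rw [hmain x hx x']
  refine ⟨fun h => h.1, fun h => ⟨h, ?_⟩⟩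
  obtain ⟨g, hg, rfl⟩ := h
  have hd : g.det * g.det = 1 := hdet g hg
  rw [horb]
  rcases mul_self_eq_one_iff.1 hd with h | h <;> simp [h]
end

section
/- In the symplectic case (F' = F, τ = id, ε = -1, n even, so j ∈ GL_n(F) is an invertible alternating matrix and G^j(E) = Sp(j, E) = {g ∈ GL_n(E) : transpose(g)·j·g = j}), the symmetric space X^j is a single G^j(E)-orbit: X^j = G^j(E)·I_n. -/
open Matrix

theorem aux_fixed {E V : Type} [Field E] [CharZero E] [AddCommGroup V] [Module E V]
    [FiniteDimensional E V] (σ : E ≃+* E) (d : E) (hd : d ≠ 0) (hσd : σ d = -d)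
    (ω : V →ₗ[E] V →ₗ[E] E) (halt : ∀ v w, ω v w = - ω w v)
    (hnd : ∀ v, v ≠ 0 → ∃ w, ω v w ≠ 0)
    (c : V →+ V) (hc : ∀ (a : E) v, c (a • v) = σ a • c v) (hcc : ∀ v, c (c v) = v)
    (hωc : ∀ v w, ω (c v) (c w) = σ (ω v w)) (m : ℕ) (hm : 2 * m ≤ Module.finrank E V) :
    ∃ e f : Fin m → V, (∀ i, c (e i) = e i) ∧ (∀ i, c (f i) = f i) ∧
      (∀ i k, ω (e i) (e k) = 0) ∧ (∀ i k, ω (f i) (f k) = 0) ∧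
      (∀ i k, ω (e i) (f k) = if i = k then 1 else 0) := by
  have hself : ∀ v, ω v v = 0 := fun v => self_eq_neg.mp (halt v v)
  induction m with
  | zero => exact ⟨Fin.elim0, Fin.elim0, fun i => i.elim0, fun i => i.elim0,
      fun i => i.elim0, fun i => i.elim0, fun i => i.elim0⟩
  | succ m ih =>
    obtain ⟨e, f, he, hf, hee, hff, hef⟩ := ih (by omega)
    have hfe : ∀ i k, ω (f i) (e k) = if i = k then -1 else 0 := by
      intro i k
      rw [halt, hef]
      by_cases h : i = k
      · simp [h]
      · simp [h, Ne.symm h]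
    have heσ : ∀ i w, ω (e i) (c w) = σ (ω (e i) w) := fun i w => by
      rw [← hωc, he]
    have hfσ : ∀ i w, ω (f i) (c w) = σ (ω (f i) w) := fun i w => by
      rw [← hωc, hf]
    obtain ⟨u0, hu0, hu0e, hu0f⟩ : ∃ u : V, u ≠ 0 ∧ (∀ i, ω (e i) u = 0) ∧
        ∀ i, ω (f i) u = 0 := by
      let L : V →ₗ[E] (Fin m ⊕ Fin m → E) :=
        LinearMap.pi (Sum.elim (fun i => ω (e i)) (fun i => ω (f i)))
      have hL : LinearMap.ker L ≠ ⊥ := LinearMap.ker_ne_bot_of_finrank_lt (by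
        simp; omega)
      obtain ⟨u, hu, hu0⟩ := Submodule.exists_mem_ne_zero_of_ne_bot hL
      have hu' : L u = 0 := hu
      refine ⟨u, hu0, fun i => ?_, fun i => ?_⟩
      · simpa [L] using congrFun hu' (Sum.inl i)
      · simpa [L] using congrFun hu' (Sum.inr i)
    obtain ⟨u, hu, hcu, hue, huf⟩ : ∃ u : V, u ≠ 0 ∧ c u = u ∧ (∀ i, ω (e i) u = 0) ∧
        ∀ i, ω (f i) u = 0 := by
      by_cases h : u0 + c u0 = 0
      · refine ⟨d • u0, smul_ne_zero hd hu0, ?_, ?_, ?_⟩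
        · rw [hc, hσd, eq_neg_of_add_eq_zero_right h]; simp
        · intro i; simp [hu0e]
        · intro i; simp [hu0f]
      · refine ⟨u0 + c u0, h, ?_, ?_, ?_⟩
        · rw [map_add, hcc, add_comm]
        · intro i; simp [hu0e, heσ]
        · intro i; simp [hu0f, hfσ]
    obtain ⟨w, hcw, huw⟩ : ∃ w : V, c w = w ∧ ω u w = 1 := by
      obtain ⟨w, hw⟩ := hnd u hu
      have h1 : ω u ((ω u w)⁻¹ • w) = 1 := by simp [hw]
      generalize (ω u w)⁻¹ • w = z at h1
      refine ⟨(2:E)⁻¹ • (z + c z), ?_, ?_⟩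
      · rw [hc, map_add, hcc, add_comm, map_inv₀, map_ofNat]
      · have : ω u (c z) = 1 := by
          have := hωc u z
          rw [hcu, h1] at this; simpa using this
        simp [h1, this]; norm_num
    have hue' : ∀ i, ω u (e i) = 0 := fun i => by rw [halt, hue]; simp
    have huf' : ∀ i, ω u (f i) = 0 := fun i => by rw [halt, huf]; simp
    let w' := w - ∑ i, (ω (e i) w • f i - ω (f i) w • e i)
    have hcw' : c w' = w' := by
      simp only [w', map_sub, map_sum, hc, he, hf, hcw, ← heσ, ← hfσ]
    have huw' : ω u w' = 1 := by
      simp [w', huw, hue', huf']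
    have hew' : ∀ i, ω (e i) w' = 0 := by
      intro i
      simp [w', hee, hef]
    have hfw' : ∀ i, ω (f i) w' = 0 := by
      intro i
      simp [w', hff, hfe]
    have hw'f : ∀ i, ω w' (f i) = 0 := fun i => by rw [halt, hfw']; simp
    refine ⟨Fin.cons u e, Fin.cons w' f, ?_, ?_, ?_, ?_, ?_⟩
    · intro i; refine Fin.cases ?_ (fun i => ?_) i <;> simp [hcu, he]
    · intro i; refine Fin.cases ?_ (fun i => ?_) i <;> simp [hcw', hf]
    · intro i k
      refine Fin.cases ?_ (fun i => ?_) i <;> refine Fin.cases ?_ (fun k => ?_) k <;>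
        simp [hself, hee, hue, hue']
    · intro i k
      refine Fin.cases ?_ (fun i => ?_) i <;> refine Fin.cases ?_ (fun k => ?_) k <;>
        simp [hself, hff, hfw', hw'f]
    · intro i k
      refine Fin.cases ?_ (fun i => ?_) i <;> refine Fin.cases ?_ (fun k => ?_) k <;>
        simp [huw', hef, huf', hew', (Fin.succ_ne_zero _).symm]

theorem aux_mat {E : Type} [Field E] [CharZero E] (σ : E ≃+* E) (hσσ : ∀ a, σ (σ a) = a)
    (d : E) (hd : d ≠ 0) (hσd : σ d = -d) (m : ℕ)
    (j : Matrix (Fin (m + m)) (Fin (m + m)) E)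
    (hjF : ∀ a b, σ (j a b) = j a b) (hjU : IsUnit j) (hjalt : jᵀ = -j)
    (x : Matrix (Fin (m + m)) (Fin (m + m)) E)
    (hxj : xᵀ * j * x = j) (hxx : x * x.map ⇑σ = 1) :
    ∃ g : Matrix (Fin (m + m)) (Fin (m + m)) E,
      gᵀ * j * g = (Matrix.J (Fin m) E).submatrix finSumFinEquiv.symm finSumFinEquiv.symm ∧
      x * g.map ⇑σ = g := by
  let c : (Fin (m + m) → E) →+ (Fin (m + m) → E) :=
    { toFun := fun v => x *ᵥ (fun i => σ (v i))
      map_zero' := by ext; simp [Matrix.mulVec, dotProduct]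
      map_add' := fun v w => by
        rw [← Matrix.mulVec_add]; congr 1; ext i; simp }
  have hcdef : ∀ v, c v = x *ᵥ (fun i => σ (v i)) := fun v => rfl
  let ω : (Fin (m + m) → E) →ₗ[E] (Fin (m + m) → E) →ₗ[E] E := Matrix.toLinearMap₂' E j
  have hω : ∀ v w, ω v w = v ⬝ᵥ j *ᵥ w := fun v w => Matrix.toLinearMap₂'_apply' j v w
  have hσmv : ∀ (M : Matrix (Fin (m + m)) (Fin (m + m)) E) (v : Fin (m + m) → E),
      (fun i => σ ((M *ᵥ v) i)) = M.map σ *ᵥ (fun i => σ (v i)) := by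
    intro M v; ext i; simp [Matrix.mulVec, dotProduct]
  have hσdp : ∀ (v w : Fin (m + m) → E),
      σ (v ⬝ᵥ w) = (fun i => σ (v i)) ⬝ᵥ (fun i => σ (w i)) := by
    intro v w; simp [dotProduct]
  have hjmap : j.map σ = j := by ext a b; simp [hjF]
  obtain ⟨e, f, he, hf, hee, hff, hef⟩ := aux_fixed σ d hd hσd ω
    (by
      intro v w
      rw [hω, hω, Matrix.dotProduct_mulVec, ← Matrix.mulVec_transpose, hjalt, Matrix.neg_mulVec,
        neg_dotProduct, dotProduct_comm])
    (by
      intro v hv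
      by_contra! h
      apply hv
      have h1 : v ᵥ* j = 0 := by
        apply dotProduct_eq_zero
        intro w
        rw [← Matrix.dotProduct_mulVec, ← hω, h]
      obtain ⟨k, hk⟩ := hjU.exists_right_inv
      rw [← Matrix.vecMul_one v, ← hk, ← Matrix.vecMul_vecMul, h1, Matrix.zero_vecMul])
    c
    (by
      intro a v
      rw [hcdef, hcdef, ← Matrix.mulVec_smul]; congr 1; ext i; simp)
    (by
      intro v
      rw [hcdef, hcdef, hσmv, Matrix.mulVec_mulVec, hxx, Matrix.one_mulVec]
      simp [hσσ])
    (by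
      intro v w
      rw [hω, hω, hσdp, hσmv, hjmap, hcdef, hcdef]
      conv_rhs => rw [← hxj]
      rw [← Matrix.mulVec_mulVec, ← Matrix.mulVec_mulVec, Matrix.dotProduct_mulVec _ xᵀ,
        Matrix.vecMul_transpose])
    m (by simp; omega)
  have halt : ∀ v w, ω v w = - ω w v := by
      intro v w
      rw [hω, hω, Matrix.dotProduct_mulVec, ← Matrix.mulVec_transpose, hjalt, Matrix.neg_mulVec,
        neg_dotProduct, dotProduct_comm]
  let b : Fin m ⊕ Fin m → Fin (m + m) → E := Sum.elim f e
  have hb : ∀ i, c (b i) = b i := by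
    rintro (i | i) <;> simp [b, he, hf]
  have hbb : ∀ i k, ω (b i) (b k) = Matrix.J (Fin m) E i k := by
    rintro (i | i) (k | k)
    · simp [b, hff, Matrix.J]
    · simp [b, Matrix.J, halt (f i), hef, Matrix.one_apply, eq_comm]
    · simp [b, Matrix.J, hef, Matrix.one_apply]
    · simp [b, hee, Matrix.J]
  refine ⟨Matrix.of fun a i => b (finSumFinEquiv.symm i) a, ?_, ?_⟩
  · ext i k
    rw [Matrix.submatrix_apply, ← hbb, hω, Matrix.mul_assoc]
    rfl
  · ext a i
    exact congrFun (hb (finSumFinEquiv.symm i)) a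

/-- In the symplectic case (`j ∈ GL_n(F)` an invertible alternating matrix,
`n` even, `G^j(E) = Sp(j,E) = {g ∈ GL_n(E) : gᵀ j g = j}`), the symmetric space
`X^j = {x ∈ G^j(E) : x·σ(x) = 1}` is a single `G^j(E)`-orbit for the twisted conjugation
action `g·x = g x σ(g)⁻¹`: namely `X^j = G^j(E)·I_n`.
Here `F` is the fixed field of the Galois involution `σ` of the quadratic extension `E/F`
of non-archimedean local fields of characteristic zero, so "`j` has entries in `F`" is
expressed by `σ`-invariance of the entries. -/
theorem stmt_5 (p : ℕ) [Fact p.Prime]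
    (E : Type) [Field E] [Algebra ℚ_[p] E] [FiniteDimensional ℚ_[p] E]
    (σ : E ≃ₐ[ℚ_[p]] E) (hσ1 : σ ≠ 1) (hσ2 : σ * σ = 1)
    (n : ℕ) (hn : Even n)
    (j : Matrix (Fin n) (Fin n) E)
    (hjF : ∀ a b, σ (j a b) = j a b) (hjU : IsUnit j) (hjalt : jᵀ = -j)
    (x : Matrix (Fin n) (Fin n) E)
    (hx : (IsUnit x ∧ xᵀ * j * x = j) ∧ x * x.map ⇑σ = 1) :
    ∃ g : Matrix (Fin n) (Fin n) E,
      (IsUnit g ∧ gᵀ * j * g = j) ∧ x = g * 1 * (g.map ⇑σ)⁻¹ := by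
  classical
  obtain ⟨m, rfl⟩ := hn
  obtain ⟨⟨hxU, hxj⟩, hxx⟩ := hx
  have : CharZero E := charZero_of_injective_algebraMap (algebraMap ℚ_[p] E).injective
  have hσσ : ∀ a, σ (σ a) = a := fun a => by
    rw [← AlgEquiv.mul_apply, hσ2, AlgEquiv.one_apply]
  obtain ⟨a, ha⟩ : ∃ a, σ a ≠ a := by
    by_contra! h
    exact hσ1 (AlgEquiv.ext h)
  have hd : a - σ a ≠ 0 := sub_ne_zero.mpr (Ne.symm ha)
  have hσd : σ (a - σ a) = -(a - σ a) := by rw [map_sub, hσσ]; ring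
  obtain ⟨g, hg, hxg⟩ := aux_mat σ.toRingEquiv hσσ _ hd hσd m j hjF hjU hjalt x hxj hxx
  obtain ⟨h, hh, hxh⟩ := aux_mat σ.toRingEquiv hσσ _ hd hσd m j hjF hjU hjalt 1
    (by simp) (by
      rw [Matrix.map_one _ (map_zero _) (map_one _), one_mul])
  have hJ : IsUnit ((Matrix.J (Fin m) E).submatrix finSumFinEquiv.symm
      (finSumFinEquiv (m := m) (n := m)).symm).det := by
    rw [Matrix.det_submatrix_equiv_self]; exact Matrix.isUnit_det_J _ _
  have hgd : IsUnit g.det := by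
    rw [← hg, Matrix.det_mul] at hJ
    exact isUnit_of_mul_isUnit_right hJ
  have hhd : IsUnit h.det := by
    rw [← hh, Matrix.det_mul] at hJ
    exact isUnit_of_mul_isUnit_right hJ
  have hxg' : x * g.map σ = g := hxg
  have hxh' : h.map σ = h := by rw [one_mul] at hxh; exact hxh
  have h1 : h * h⁻¹ = 1 := Matrix.mul_nonsing_inv _ hhd
  have h2 : h⁻¹ * h = 1 := Matrix.nonsing_inv_mul _ hhd
  have hinv : (h⁻¹).map σ = h⁻¹ := by
    have h3 : (h⁻¹).map σ * h = 1 := by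
      conv_lhs => rw [← hxh']
      rw [hxh', ← hxh', ← Matrix.map_mul, hxh', h2, Matrix.map_one _ (map_zero _) (map_one _)]
    calc (h⁻¹).map σ = (h⁻¹).map σ * (h * h⁻¹) := by rw [h1, mul_one]
      _ = h⁻¹ := by rw [← mul_assoc, h3, one_mul]
  have hu : IsUnit (g * h⁻¹) := by
    rw [Matrix.isUnit_iff_isUnit_det, Matrix.det_mul]
    exact hgd.mul (Matrix.isUnit_nonsing_inv_det _ hhd)
  have hfix : x * (g * h⁻¹).map σ = g * h⁻¹ := by
    rw [Matrix.map_mul, hinv, ← mul_assoc, hxg']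
  refine ⟨g * h⁻¹, ⟨hu, ?_⟩, ?_⟩
  · have ht : (h⁻¹)ᵀ * hᵀ = 1 := by rw [← Matrix.transpose_mul, h1, Matrix.transpose_one]
    calc (g * h⁻¹)ᵀ * j * (g * h⁻¹) = (h⁻¹)ᵀ * (gᵀ * j * g) * h⁻¹ := by
          rw [Matrix.transpose_mul]; simp only [mul_assoc]
      _ = ((h⁻¹)ᵀ * hᵀ) * j * (h * h⁻¹) := by rw [hg, ← hh]; simp only [mul_assoc]
      _ = j := by rw [ht, h1, one_mul, mul_one]
  · have hdet : IsUnit ((g * h⁻¹).map σ).det := by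
      have h5 := (Matrix.isUnit_iff_isUnit_det _).mp hu
      rw [← hfix, Matrix.det_mul] at h5
      exact isUnit_of_mul_isUnit_right h5
    calc x = x * (g * h⁻¹).map σ * ((g * h⁻¹).map σ)⁻¹ := by
          rw [mul_assoc, Matrix.mul_nonsing_inv _ hdet, mul_one]
      _ = g * h⁻¹ * 1 * ((g * h⁻¹).map σ)⁻¹ := by rw [hfix, mul_one]
end
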